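/- arXiv:2205.09567 — 7 statements merged into one kernel-verified Lean document; each statement's English description precedes it below -/
import Mathlib

section
/- For every real number c ≥ 1, every real ε with 0 < ε ≤ exp(−1), and every natural number n with (n : ℝ) ≥ 2·e·c·log(ε⁻¹), one has c^n / n! ≤ ε. -/
theorem pow_div_factorial_le_of_large_degree
    (c : ℝ) (hc : 1 ≤ c) (ε : ℝ) (hε : 0 < ε) (hε' : ε ≤ Real.exp (-1))
    (n : ℕ) (hn : 2 * Real.exp 1 * c * Real.log ε⁻¹ ≤ (n : ℝ)) :
    c ^ n / (Nat.factorial n) ≤ ε := by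
  have hL : 1 ≤ Real.log ε⁻¹ := by
    have h := Real.log_le_log hε hε'
    rw [Real.log_exp] at h
    rw [Real.log_inv]
    linarith
  have he : 2 ≤ Real.exp 1 := by
    have := Real.add_one_le_exp (1 : ℝ)
    linarith
  have hec : 2 ≤ Real.exp 1 * c := by nlinarith
  have h1 : Real.exp 1 * (2 * c) ≤ n := by nlinarith
  have h2 : 2 * Real.log ε⁻¹ ≤ n := by nlinarith
  have hf : (0 : ℝ) < Nat.factorial n := by positivity
  have h3 : (2 * c) ^ n ≤ (Nat.factorial n : ℝ) := by
    have ha := Real.pow_div_factorial_le_exp (x := (n : ℝ)) (Nat.cast_nonneg n) n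
    rw [div_le_iff₀ hf, ← Real.exp_one_pow] at ha
    have hb : (Real.exp 1 * (2 * c)) ^ n ≤ (n : ℝ) ^ n :=
      pow_le_pow_left₀ (by positivity) h1 n
    rw [mul_pow] at hb
    exact le_of_mul_le_mul_left (hb.trans ha) (by positivity)
  have h4 : ε⁻¹ ≤ (2 : ℝ) ^ n := by
    rw [← Real.log_le_log_iff (by positivity) (by positivity), Real.log_pow]
    have := Real.log_two_gt_d9
    nlinarith
  have h5 : 1 ≤ ε * 2 ^ n := by
    rwa [inv_le_iff_one_le_mul₀' hε] at h4
  rw [div_le_iff₀ hf]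
  have hcn : 0 ≤ c ^ n := by positivity
  calc c ^ n ≤ c ^ n * (ε * 2 ^ n) := le_mul_of_one_le_right hcn h5
    _ = ε * (2 * c) ^ n := by rw [mul_pow]; ring
    _ ≤ ε * Nat.factorial n := by gcongr
end

section
/- (Markov brothers' inequality.) Let d, k ∈ ℕ and let p ∈ ℝ[X] be a polynomial of degree at most d. Then sup_{x ∈ [−1,1]} |p^{(k)}(x)| ≤ C_M(d,k) · sup_{x ∈ [−1,1]} |p(x)|, where C_M(d,k) = (∏_{j=0}^{k−1} (d² − j²)) / (∏_{j=0}^{k−1} (2j+1)). -/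
/-- The Markov constant `C_M(d,k) = d²(d²−1²)⋯(d²−(k−1)²)/(1·3·5⋯(2k−1))`. -/
noncomputable def markovConst (d k : ℕ) : ℝ :=
  (∏ j ∈ Finset.range k, ((d : ℝ) ^ 2 - (j : ℝ) ^ 2)) /
    (∏ j ∈ Finset.range k, (2 * (j : ℝ) + 1))

open Polynomial

noncomputable def mkA (n : ℕ) : ℕ → Polynomial ℝ
  | 0 => Chebyshev.U ℝ ((n : ℤ) - 1)
  | j + 1 => (1 - X ^ 2) * derivative (mkA n j) + (2 * (j : ℝ[X]) - 1) * X * mkA n j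

lemma mkA_one (n : ℕ) : mkA n 1 = -(n : ℝ[X]) * Chebyshev.T ℝ n := by
  have h := Chebyshev.add_one_mul_T_eq_poly_in_U (R := ℝ) ((n : ℤ) - 1)
  simp only [mkA]
  simp at h ⊢
  linear_combination h

lemma mkA_deriv (n j : ℕ) :
    derivative (mkA n (j + 1)) = -((n : ℝ[X]) ^ 2 - (j : ℝ[X]) ^ 2) * mkA n j := by
  induction j with
  | zero =>
    rw [mkA_one]
    have h := Chebyshev.T_derivative_eq_U (R := ℝ) (n : ℤ)
    simp [mkA, h]
    ring
  | succ j ih =>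
    have e : mkA n (j + 1 + 1) = (1 - X ^ 2) * derivative (mkA n (j + 1)) +
      (2 * ((j + 1 : ℕ) : ℝ[X]) - 1) * X * mkA n (j + 1) := rfl
    have e2 : mkA n (j + 1) = (1 - X ^ 2) * derivative (mkA n j) +
      (2 * (j : ℝ[X]) - 1) * X * mkA n j := rfl
    rw [e, ih]
    simp only [derivative_add, derivative_mul, derivative_sub, derivative_neg, derivative_one,
      derivative_natCast, derivative_X, derivative_ofNat, ih, derivative_pow]
    push_cast
    simp
    have e3 : (C 2 : ℝ[X]) = 2 := rfl
    rw [e3]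
    linear_combination ((n : ℝ[X]) ^ 2 - (j : ℝ[X]) ^ 2) * e2

lemma mkA_rec (n j : ℕ) :
    mkA n (j + 2) = (2 * (j : ℝ[X]) + 1) * X * mkA n (j + 1)
      - ((n : ℝ[X]) ^ 2 - (j : ℝ[X]) ^ 2) * (1 - X ^ 2) * mkA n j := by
  have e : mkA n (j + 1 + 1) = (1 - X ^ 2) * derivative (mkA n (j + 1)) +
      (2 * ((j + 1 : ℕ) : ℝ[X]) - 1) * X * mkA n (j + 1) := rfl
  rw [e, mkA_deriv]
  push_cast
  ring

noncomputable def mkS (n j : ℕ) (x : ℝ) : ℝ := (mkA n j).eval x * √(1 - x ^ 2) / (1 - x ^ 2) ^ j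

noncomputable def mkT (n j : ℕ) (x : ℝ) : ℝ := (derivative^[j] (Chebyshev.T ℝ n)).eval x

lemma iter_hasDerivAt (p : ℝ[X]) (j : ℕ) (x : ℝ) :
    HasDerivAt (fun x => (derivative^[j] p).eval x) ((derivative^[j + 1] p).eval x) x := by
  rw [Function.iterate_succ_apply']
  exact Polynomial.hasDerivAt _ _

lemma mkT_hasDerivAt (n j : ℕ) (x : ℝ) : HasDerivAt (mkT n j) (mkT n (j + 1) x) x :=
  iter_hasDerivAt _ _ _

lemma s_pos {x : ℝ} (h1 : -1 < x) (h2 : x < 1) : 0 < 1 - x ^ 2 := by nlinarith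

lemma mkS_hasDerivAt (n j : ℕ) {x : ℝ} (h1 : -1 < x) (h2 : x < 1) :
    HasDerivAt (mkS n j) (mkS n (j + 1) x) x := by
  have hs := s_pos h1 h2
  have hd : HasDerivAt (fun x : ℝ => 1 - x ^ 2) (-(2 * x)) x := by
    simpa using (hasDerivAt_pow 2 x).const_sub 1
  have h := (((mkA n j).hasDerivAt x).mul (hd.sqrt hs.ne')).div (hd.pow j) (pow_pos hs j).ne'
  refine h.congr_deriv ?_
  have hq : 0 < √(1 - x ^ 2) := Real.sqrt_pos.2 hs
  have hq2 : √(1 - x ^ 2) ^ 2 = 1 - x ^ 2 := Real.sq_sqrt hs.le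
  simp only [mkS, mkA, Pi.pow_apply]
  simp only [eval_add, eval_mul, eval_sub, eval_one, eval_pow, eval_X, eval_natCast, eval_ofNat]
  set q := √(1 - x ^ 2)
  rw [← hq2]
  rcases j with _ | j
  · field_simp
    ring_nf
  · field_simp
    push_cast
    simp
    ring

lemma mkS_ode (n j : ℕ) {x : ℝ} (h1 : -1 < x) (h2 : x < 1) :
    (1 - x ^ 2) * mkS n (j + 2) x =
      (2 * j + 1) * x * mkS n (j + 1) x - ((n : ℝ) ^ 2 - (j : ℝ) ^ 2) * mkS n j x := by
  have hs := s_pos h1 h2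
  have h := congrArg (eval x) (mkA_rec n j)
  simp only [eval_add, eval_mul, eval_sub, eval_one, eval_pow, eval_X, eval_natCast, eval_ofNat] at h
  simp only [mkS, h]
  field_simp
  ring

lemma mkT_ode (n j : ℕ) (x : ℝ) :
    (1 - x ^ 2) * mkT n (j + 2) x =
      (2 * j + 1) * x * mkT n (j + 1) x - ((n : ℝ) ^ 2 - (j : ℝ) ^ 2) * mkT n j x := by
  have := Chebyshev.one_sub_X_sq_mul_iterate_derivative_T_eval n j x
  simpa [mkT] using this

lemma mkS_const (n : ℕ) : ∃ c : ℝ, ∀ x, mkS n (n + 1) x = c * √(1 - x ^ 2) / (1 - x ^ 2) ^ (n + 1) := by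
  have h := mkA_deriv n n
  simp at h
  obtain ⟨c, hc⟩ := Polynomial.natDegree_eq_zero.1 h
  exact ⟨c, fun x => by simp [mkS, ← hc]⟩

lemma mkS_one (n : ℕ) {x : ℝ} (h1 : -1 < x) (h2 : x < 1) :
    mkS n 1 x = -n * mkT n 0 x / √(1 - x ^ 2) := by
  have hs := s_pos h1 h2
  have hq : 0 < √(1 - x ^ 2) := Real.sqrt_pos.2 hs
  have hq2 : √(1 - x ^ 2) ^ 2 = 1 - x ^ 2 := Real.sq_sqrt hs.le
  simp only [mkS, mkT, mkA_one, pow_one, Function.iterate_zero, id]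
  simp
  set q := √(1 - x ^ 2)
  rw [← hq2]
  field_simp

lemma mkT_one (n : ℕ) {x : ℝ} (h1 : -1 < x) (h2 : x < 1) :
    mkT n 1 x = n * mkS n 0 x / √(1 - x ^ 2) := by
  have hs := s_pos h1 h2
  have hq : 0 < √(1 - x ^ 2) := Real.sqrt_pos.2 hs
  have h := Chebyshev.T_derivative_eq_U (R := ℝ) (n : ℤ)
  simp [mkS, mkT, h, mkA]
  field_simp

lemma mkT_cos (n : ℕ) (θ : ℝ) : mkT n 0 (Real.cos θ) = Real.cos (n * θ) := by
  simp [mkT]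

lemma mkS_cos (n : ℕ) {θ : ℝ} (h0 : 0 ≤ θ) (h1 : θ ≤ Real.pi) :
    mkS n 0 (Real.cos θ) = Real.sin (n * θ) := by
  have h := Chebyshev.U_real_cos θ ((n : ℤ) - 1)
  have : √(1 - Real.cos θ ^ 2) = Real.sin θ := by
    rw [← Real.sin_sq, Real.sqrt_sq (Real.sin_nonneg_of_nonneg_of_le_pi h0 h1)]
  simp [mkS, mkA, this] at h ⊢

lemma mk_sq (n : ℕ) {x : ℝ} (h1 : -1 < x) (h2 : x < 1) : mkT n 0 x ^ 2 + mkS n 0 x ^ 2 = 1 := by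
  rw [← Real.cos_arccos h1.le h2.le, mkT_cos, mkS_cos n (Real.arccos_nonneg x) (Real.arccos_le_pi x)]
  exact Real.cos_sq_add_sin_sq _

noncomputable def mkW (n j : ℕ) (x : ℝ) : ℝ :=
  mkT n j x * mkS n (j + 1) x - mkS n j x * mkT n (j + 1) x

lemma mkW_neg (n j : ℕ) (hn : 1 ≤ n) (hj : j ≤ n) {x : ℝ} (h1 : -1 < x) (h2 : x < 1) :
    mkW n j x < 0 := by
  have hs := s_pos h1 h2
  induction j with
  | zero =>
    have hq : 0 < √(1 - x ^ 2) := Real.sqrt_pos.2 hs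
    have : mkW n 0 x = -(n / √(1 - x ^ 2)) := by
      simp only [mkW, zero_add]
      rw [mkS_one n h1 h2, mkT_one n h1 h2]
      have := mk_sq n h1 h2
      field_simp
      linear_combination -this
    rw [this]
    have : (0 : ℝ) < n := by exact_mod_cast hn
    have := div_pos this hq
    linarith
  | succ j ih =>
    have ih := ih (by omega)
    have e : (1 - x ^ 2) * mkW n (j + 1) x = ((n : ℝ) ^ 2 - (j : ℝ) ^ 2) * mkW n j x := by
      simp only [mkW]
      linear_combination mkT n (j + 1) x * mkS_ode n j h1 h2 - mkS n (j + 1) x * mkT_ode n j x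
    have hl : (0 : ℝ) < (n : ℝ) ^ 2 - (j : ℝ) ^ 2 := by
      have : (j : ℝ) + 1 ≤ n := by exact_mod_cast hj
      have : (0 : ℝ) ≤ j := by positivity
      nlinarith
    by_contra hc
    push Not at hc
    nlinarith [mul_nonneg hs.le hc]

lemma mkS_unbdd (n j : ℕ) (hn : 1 ≤ n) (K x1 : ℝ) (hx1 : x1 < 1) :
    ∃ x, x1 < x ∧ -1 < x ∧ x < 1 ∧ mkS n (j + 1) x < K := by
  induction j generalizing K x1 with
  | zero =>
    have hT : Filter.Tendsto (mkT n 0) (nhdsWithin 1 (Set.Iio 1)) (nhds 1) := by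
      have h := (mkT_hasDerivAt n 0 1).continuousAt.tendsto
      have h1 : mkT n 0 1 = 1 := by simp [mkT]
      rw [h1] at h
      exact h.mono_left nhdsWithin_le_nhds
    have hq : Filter.Tendsto (fun x : ℝ => √(1 - x ^ 2)) (nhdsWithin 1 (Set.Iio 1))
        (nhdsWithin 0 (Set.Ioi 0)) := by
      refine tendsto_nhdsWithin_iff.2 ⟨?_, ?_⟩
      · have : Continuous (fun x : ℝ => √(1 - x ^ 2)) := by fun_prop
        have h := this.tendsto 1
        simp at h
        exact h.mono_left nhdsWithin_le_nhds
      · have : Set.Ioo (0 : ℝ) 1 ∈ nhdsWithin (1 : ℝ) (Set.Iio 1) := Ioo_mem_nhdsLT one_pos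
        filter_upwards [this] with x hx
        exact Real.sqrt_pos.2 (s_pos (by linarith [hx.1]) hx.2)
    have hn' : (0 : ℝ) < n := by exact_mod_cast hn
    have hlim := Filter.Tendsto.pos_mul_atTop one_pos hT (tendsto_inv_nhdsGT_zero.comp hq)
    have hev := hlim.eventually_gt_atTop (-K / n)
    have hm : Set.Ioo (max x1 0) 1 ∈ nhdsWithin (1 : ℝ) (Set.Iio 1) :=
      Ioo_mem_nhdsLT (max_lt hx1 one_pos)
    obtain ⟨x, hx, hxm⟩ := (hev.and hm).exists
    have hx0 : 0 < x := lt_of_le_of_lt (le_max_right _ _) hxm.1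
    refine ⟨x, lt_of_le_of_lt (le_max_left _ _) hxm.1, by linarith, hxm.2, ?_⟩
    rw [zero_add, mkS_one n (by linarith) hxm.2]
    rw [div_lt_iff₀ hn'] at hx
    simp only [Function.comp] at hx
    rw [mul_div_assoc, div_eq_mul_inv]
    linarith
  | succ j ih =>
    set a := max x1 0
    have ha : a < 1 := max_lt hx1 one_pos
    have ha0 : 0 ≤ a := le_max_right _ _
    obtain ⟨x, hx, _, hx2, hlt⟩ := ih (mkS n (j + 1) a - |K| - 1) a ha
    obtain ⟨c, hc, hc'⟩ := exists_hasDerivAt_eq_slope (mkS n (j + 1)) (mkS n (j + 2)) hx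
      (fun y hy => (mkS_hasDerivAt n (j + 1) (by linarith [hy.1]) (by linarith [hy.2])).continuousAt.continuousWithinAt)
      (fun y hy => mkS_hasDerivAt n (j + 1) (by linarith [hy.1]) (by linarith [hy.2]))
    refine ⟨c, lt_of_le_of_lt (le_max_left _ _) hc.1, by linarith [hc.1], by linarith [hc.2], ?_⟩
    rw [show j + 1 + 1 = j + 2 from rfl, hc', div_lt_iff₀ (by linarith)]
    have h3 : -|K| ≤ K * (x - a) := by
      have : |K * (x - a)| ≤ |K| := by
        rw [abs_mul, abs_of_pos (by linarith : 0 < x - a)]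
        nlinarith [abs_nonneg K]
      exact (neg_le_neg this).trans (neg_abs_le _)
    linarith

noncomputable def mkE (n j : ℕ) (x : ℝ) : ℝ := mkT n j x ^ 2 + mkS n j x ^ 2
noncomputable def mkC (n j : ℕ) (x : ℝ) : ℝ :=
  mkT n j x * mkT n (j + 1) x + mkS n j x * mkS n (j + 1) x

lemma mkE_hasDerivAt (n j : ℕ) {x : ℝ} (h1 : -1 < x) (h2 : x < 1) :
    HasDerivAt (mkE n j) (2 * mkC n j x) x := by
  refine (((mkT_hasDerivAt n j x).pow 2).add ((mkS_hasDerivAt n j h1 h2).pow 2)).congr_deriv ?_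
  simp [mkC]
  ring

lemma mkC_hasDerivAt (n j : ℕ) {x : ℝ} (h1 : -1 < x) (h2 : x < 1) :
    HasDerivAt (mkC n j) (mkE n (j + 1) x + (mkT n j x * mkT n (j + 2) x
      + mkS n j x * mkS n (j + 2) x)) x := by
  refine (((mkT_hasDerivAt n j x).mul (mkT_hasDerivAt n (j + 1) x)).add
    ((mkS_hasDerivAt n j h1 h2).mul (mkS_hasDerivAt n (j + 1) h1 h2))).congr_deriv ?_
  simp [mkE]
  ring

lemma r_hasDerivAt {x : ℝ} (h1 : -1 < x) (h2 : x < 1) (m : ℕ) :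
    HasDerivAt (fun x : ℝ => (1 - x ^ 2)⁻¹ ^ m) (2 * m * x * (1 - x ^ 2)⁻¹ ^ (m + 1)) x := by
  have hs := s_pos h1 h2
  have hd : HasDerivAt (fun x : ℝ => 1 - x ^ 2) (-(2 * x)) x := by
    simpa using (hasDerivAt_pow 2 x).const_sub 1
  refine ((hd.inv hs.ne').pow m).congr_deriv ?_
  rcases m with _ | m
  · simp
  · simp
    field_simp
    ring

lemma ev_Ioo {x : ℝ} (h1 : -1 < x) (h2 : x < 1) : ∀ᶠ y in nhds x, -1 < y ∧ y < 1 :=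
  Ioo_mem_nhds h1 h2

lemma mkE_one (n : ℕ) {x : ℝ} (h1 : -1 < x) (h2 : x < 1) :
    mkE n 1 x = n ^ 2 * (1 - x ^ 2)⁻¹ := by
  have hs := s_pos h1 h2
  have hq : 0 < √(1 - x ^ 2) := Real.sqrt_pos.2 hs
  have hq2 : √(1 - x ^ 2) ^ 2 = 1 - x ^ 2 := Real.sq_sqrt hs.le
  rw [mkE, mkS_one n h1 h2, mkT_one n h1 h2, div_pow, div_pow, hq2]
  have := mk_sq n h1 h2
  field_simp
  linear_combination n ^ 2 * this

/-- The expansion of `E_j` in powers of `1/(1-x^2)`, with nonnegative coefficients. -/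
def Expn (n j : ℕ) (b : ℕ → ℝ) : Prop :=
  (∀ i, 0 ≤ b i) ∧ (∀ i, j ≤ i → b i = 0) ∧
  (∀ i, i < j → 2 * ((i : ℝ) + 1) * ((n : ℝ) ^ 2 - ((i : ℝ) + 1) ^ 2) * b (i + 1) =
    ((j : ℝ) - i - 1) * (j + i) * (2 * i + 1) * b i) ∧
  ∀ x : ℝ, -1 < x → x < 1 → mkE n j x = ∑ i ∈ Finset.range j, b i * (1 - x ^ 2)⁻¹ ^ (j + i)

lemma Expn.mkC {n j : ℕ} {b : ℕ → ℝ} (h : Expn n j b) {x : ℝ} (h1 : -1 < x) (h2 : x < 1) :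
    mkC n j x = ∑ i ∈ Finset.range j, b i * ((j + i : ℕ) * x * (1 - x ^ 2)⁻¹ ^ (j + i + 1)) := by
  have hd : HasDerivAt (fun x : ℝ => ∑ i ∈ Finset.range j, b i * (1 - x ^ 2)⁻¹ ^ (j + i))
      (∑ i ∈ Finset.range j, b i * (2 * (j + i : ℕ) * x * (1 - x ^ 2)⁻¹ ^ (j + i + 1))) x :=
    HasDerivAt.fun_sum fun i _ => (r_hasDerivAt h1 h2 (j + i)).const_mul (b i)
  have he : mkE n j =ᶠ[nhds x] (fun x : ℝ => ∑ i ∈ Finset.range j, b i * (1 - x ^ 2)⁻¹ ^ (j + i)) := by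
    filter_upwards [ev_Ioo h1 h2] with y hy
    exact h.2.2.2 y hy.1 hy.2
  have := (mkE_hasDerivAt n j h1 h2).unique (hd.congr_of_eventuallyEq he)
  have h3 : 2 * _root_.mkC n j x = 2 * ∑ i ∈ Finset.range j, b i * ((j + i : ℕ) * x * (1 - x ^ 2)⁻¹ ^ (j + i + 1)) := by
    rw [this, Finset.mul_sum]
    exact Finset.sum_congr rfl fun i _ => by ring
  linarith

lemma Expn.mkE_succ {n j : ℕ} {b : ℕ → ℝ} (h : Expn n j b) {x : ℝ} (h1 : -1 < x) (h2 : x < 1) :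
    mkE n (j + 1) x = ∑ i ∈ Finset.range j, b i *
      (((n : ℝ) ^ 2 - j ^ 2 - 2 * i * (j + i)) * (1 - x ^ 2)⁻¹ ^ (j + i + 1)
        + (j + i) * (2 * i + 1) * (1 - x ^ 2)⁻¹ ^ (j + i + 2)) := by
  have hs := s_pos h1 h2
  have hd : HasDerivAt (fun x : ℝ => ∑ i ∈ Finset.range j, b i * ((j + i : ℕ) * x * (1 - x ^ 2)⁻¹ ^ (j + i + 1)))
      (∑ i ∈ Finset.range j, b i * ((j + i : ℕ) * 1 * (1 - x ^ 2)⁻¹ ^ (j + i + 1) +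
        (j + i : ℕ) * x * (2 * (j + i + 1 : ℕ) * x * (1 - x ^ 2)⁻¹ ^ (j + i + 1 + 1)))) x :=
    HasDerivAt.fun_sum fun i _ =>
      ((((hasDerivAt_id x).const_mul ((j + i : ℕ) : ℝ)).mul (r_hasDerivAt h1 h2 (j + i + 1))).const_mul (b i))
  have he : _root_.mkC n j =ᶠ[nhds x] (fun x : ℝ => ∑ i ∈ Finset.range j, b i * ((j + i : ℕ) * x * (1 - x ^ 2)⁻¹ ^ (j + i + 1))) := by
    filter_upwards [ev_Ioo h1 h2] with y hy
    exact h.mkC hy.1 hy.2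
  have h3 := (mkC_hasDerivAt n j h1 h2).unique (hd.congr_of_eventuallyEq he)
  have h4 : mkT n j x * mkT n (j + 2) x + mkS n j x * mkS n (j + 2) x =
      (1 - x ^ 2)⁻¹ * ((2 * j + 1) * x * _root_.mkC n j x - ((n : ℝ) ^ 2 - j ^ 2) * mkE n j x) := by
    rw [eq_inv_mul_iff_mul_eq₀ hs.ne']
    simp only [_root_.mkC, mkE]
    linear_combination mkT n j x * mkT_ode n j x + mkS n j x * mkS_ode n j h1 h2
  rw [h4, h.mkC h1 h2, h.2.2.2 x h1 h2] at h3
  rw [← eq_sub_iff_add_eq] at h3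
  rw [h3, Finset.mul_sum, Finset.mul_sum, ← Finset.sum_sub_distrib, Finset.mul_sum, ← Finset.sum_sub_distrib]
  refine Finset.sum_congr rfl fun i _ => ?_
  set r := (1 - x ^ 2)⁻¹ with hr
  have hx : x ^ 2 * r = r - 1 := by
    rw [hr]; field_simp; ring
  push_cast
  linear_combination (b i * ((j : ℝ) + i) * r ^ (j + i + 1) * (2 * (j + i) + 2 - (2 * j + 1))) * hx

lemma Expn.succ {n j : ℕ} {b : ℕ → ℝ} (h : Expn n j b) (hj : 1 ≤ j) (hjn : j + 1 ≤ n) :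
    ∃ b', Expn n (j + 1) b' := by
  obtain ⟨hb, hz, hI, -⟩ := id h
  let c : ℕ → ℝ := fun i => Nat.casesOn i 0 (fun i => b i * ((j + i) * (2 * i + 1)))
  have hc0 : c 0 = 0 := rfl
  have hcs : ∀ i : ℕ, c (i + 1) = b i * ((j + i) * (2 * i + 1)) := fun _ => rfl
  let b' : ℕ → ℝ := fun i => b i * ((n : ℝ) ^ 2 - j ^ 2 - 2 * i * (j + i)) + c i
  have hl : (0 : ℝ) < (n : ℝ) ^ 2 - j ^ 2 := by
    have : (j : ℝ) + 1 ≤ n := by exact_mod_cast hjn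
    have : (0 : ℝ) ≤ j := by positivity
    nlinarith
  have key : ∀ i, i < j → b' i * ((j : ℝ) - i) = b i * ((n : ℝ) ^ 2 - j ^ 2) * (j + i) := by
    intro i hi
    rcases i with _ | i
    · simp only [b', hc0]; push_cast; ring
    · have := hI i (by omega)
      simp only [b', hcs]
      push_cast
      linear_combination -this
  have hj' : b' j = b (j - 1) * (2 * j - 1) ^ 2 := by
    obtain ⟨m, rfl⟩ : ∃ m, j = m + 1 := ⟨j - 1, by omega⟩
    simp only [b', hcs, hz _ le_rfl, Nat.add_sub_cancel]
    push_cast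
    ring
  have hz' : ∀ i, j + 1 ≤ i → b' i = 0 := by
    intro i hi
    obtain ⟨m, rfl⟩ : ∃ m, i = m + 1 := ⟨i - 1, by omega⟩
    simp [b', hcs, hz (m + 1) (by omega), hz m (by omega)]
  refine ⟨b', ?_, hz', ?_, ?_⟩
  · intro i
    rcases lt_trichotomy i j with hi | rfl | hi
    · have h1 : (0 : ℝ) < (j : ℝ) - i := sub_pos.2 (by exact_mod_cast hi)
      have h2 := key i hi
      have h3 : 0 ≤ b i * ((n : ℝ) ^ 2 - j ^ 2) * (j + i) := by
        have := hb i
        positivity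
      rw [← h2] at h3
      exact nonneg_of_mul_nonneg_left h3 h1
    · rw [hj']
      have := hb (i - 1)
      positivity
    · rw [hz' i hi]
  · intro i hi
    rcases lt_trichotomy (i + 1) j with h1 | h1 | h1
    · have k1 := key i (by omega)
      have k2 := key (i + 1) h1
      have k3 := hI i (by omega)
      push_cast at k2 ⊢
      have hp : (0 : ℝ) < (j : ℝ) - (i + 1) := sub_pos.2 (by exact_mod_cast h1)
      apply mul_right_cancel₀ hp.ne'
      linear_combination (2 * ((i : ℝ) + 1) * ((n : ℝ) ^ 2 - ((i : ℝ) + 1) ^ 2)) * k2 +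
        ((n : ℝ) ^ 2 - j ^ 2) * (j + (i + 1)) * k3 - ((j : ℝ) - i - 1) * (j + 1 + i) * (2 * i + 1) * k1
    · subst h1
      have k1 := key i (by omega)
      rw [hj']
      simp only [Nat.add_sub_cancel]
      push_cast at k1 ⊢
      linear_combination -(2 * (i : ℝ) + 2) * (2 * i + 1) * k1
    · obtain rfl : i = j := by omega
      rw [hz' (i + 1) le_rfl]
      push_cast
      ring
  · intro x h1 h2
    rw [h.mkE_succ h1 h2]
    have e1 : ∑ i ∈ Finset.range (j + 1), b' i * (1 - x ^ 2)⁻¹ ^ (j + 1 + i) =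
      ∑ i ∈ Finset.range (j + 1), b i * ((n : ℝ) ^ 2 - j ^ 2 - 2 * i * (j + i)) * (1 - x ^ 2)⁻¹ ^ (j + 1 + i)
      + ∑ i ∈ Finset.range (j + 1), c i * (1 - x ^ 2)⁻¹ ^ (j + 1 + i) := by
      rw [← Finset.sum_add_distrib]
      exact Finset.sum_congr rfl fun i _ => by simp only [b']; ring
    rw [e1, Finset.sum_range_succ, hz j le_rfl, Finset.sum_range_succ']
    simp only [hc0, hcs, zero_mul, add_zero]
    rw [← Finset.sum_add_distrib]
    exact Finset.sum_congr rfl fun i _ => by ring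

lemma exists_Expn (n j : ℕ) (hj : 1 ≤ j) (hjn : j ≤ n) : ∃ b, Expn n j b := by
  induction j, hj using Nat.le_induction with
  | base =>
    refine ⟨fun i => if i = 0 then (n : ℝ) ^ 2 else 0, ?_, ?_, ?_, ?_⟩
    · intro i; dsimp only; split_ifs <;> positivity
    · intro i hi; simp; omega
    · intro i hi
      obtain rfl : i = 0 := by omega
      simp
    · intro x h1 h2
      rw [mkE_one n h1 h2]
      simp
  | succ j hj ih =>
    obtain ⟨b, hb⟩ := ih (by omega)
    exact hb.succ hj hjn

lemma mkC_nonneg (n j : ℕ) (hjn : j ≤ n) {x : ℝ} (h1 : 0 ≤ x) (h2 : x < 1) : 0 ≤ mkC n j x := by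
  have hs := s_pos (by linarith) h2
  rcases Nat.eq_zero_or_pos j with rfl | hj
  · have : mkC n 0 x = 0 := by
      simp only [mkC, zero_add]
      rw [mkS_one n (by linarith) h2, mkT_one n (by linarith) h2]
      ring
    rw [this]
  · obtain ⟨b, hb⟩ := exists_Expn n j hj hjn
    rw [hb.mkC (by linarith) h2]
    refine Finset.sum_nonneg fun i _ => ?_
    have := hb.1 i
    positivity

lemma mkE_mono (n j : ℕ) (hj : 1 ≤ j) (hjn : j ≤ n) {x y : ℝ} (h1 : 0 ≤ x) (hxy : x ≤ y) (h2 : y < 1) :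
    mkE n j x ≤ mkE n j y := by
  obtain ⟨b, hb⟩ := exists_Expn n j hj hjn
  rw [hb.2.2.2 x (by linarith) (by linarith), hb.2.2.2 y (by linarith) h2]
  refine Finset.sum_le_sum fun i _ => ?_
  have := hb.1 i
  have hs := s_pos (by linarith) h2
  have : (1 - x ^ 2)⁻¹ ≤ (1 - y ^ 2)⁻¹ := inv_anti₀ hs (by nlinarith)
  have : 0 ≤ (1 - x ^ 2)⁻¹ := inv_nonneg.2 (by nlinarith)
  gcongr

/-- `g` has `N` points `b > t₁ > t₂ > ⋯ > -1` with alternating signs, starting with sign `σ`. -/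
def Alt (g : ℝ → ℝ) : ℕ → ℝ → ℝ → Prop
  | 0, _, _ => True
  | N + 1, b, σ => ∃ t, -1 < t ∧ t < b ∧ 0 < σ * g t ∧ Alt g N t (-σ)

lemma Alt.mono {g : ℝ → ℝ} {N : ℕ} {b b' σ : ℝ} (h : Alt g N b σ) (hb : b ≤ b') : Alt g N b' σ := by
  rcases N with _ | N
  · trivial
  · obtain ⟨t, h1, h2, h3⟩ := h
    exact ⟨t, h1, h2.trans_le hb, h3⟩

lemma Alt.neg {g : ℝ → ℝ} {N : ℕ} {b σ : ℝ} (h : Alt g N b σ) : Alt (fun x => -g x) N b (-σ) := by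
  induction N generalizing b σ with
  | zero => trivial
  | succ N ih =>
    obtain ⟨t, h1, h2, h3, h4⟩ := h
    exact ⟨t, h1, h2, by simpa using h3, ih h4⟩

lemma Alt.rolle_aux {g g' : ℝ → ℝ} (hg : ∀ x, -1 < x → x < 1 → HasDerivAt g (g' x) x)
    {N : ℕ} {t σ : ℝ} (h1 : -1 < t) (h2 : t < 1) (h3 : 0 < σ * g t) (h : Alt g N t (-σ)) :
    Alt g' N t σ := by
  induction N generalizing t σ with
  | zero => trivial
  | succ N ih =>
    obtain ⟨y, hy1, hy2, hy3, hy4⟩ := h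
    obtain ⟨c, hc, hc'⟩ := exists_hasDerivAt_eq_slope g g' hy2
      (fun z hz => (hg z (by linarith [hz.1]) (by linarith [hz.2])).continuousAt.continuousWithinAt)
      (fun z hz => hg z (by linarith [hz.1]) (by linarith [hz.2]))
    refine ⟨c, by linarith [hc.1], hc.2, ?_, (ih hy1 (by linarith) hy3 hy4).mono hc.1.le⟩
    rw [hc', ← mul_div_assoc]
    apply div_pos _ (by linarith)
    linarith

lemma Alt.rolle {g g' : ℝ → ℝ} (hg : ∀ x, -1 < x → x < 1 → HasDerivAt g (g' x) x)
    {N : ℕ} {b σ : ℝ} (hb : b ≤ 1) (h : Alt g (N + 1) b σ) : Alt g' N b σ := by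
  obtain ⟨t, h1, h2, h3, h4⟩ := h
  exact (Alt.rolle_aux hg h1 (h2.trans_le hb) h3 h4).mono h2.le

lemma Alt.rolle_iter {G : ℕ → ℝ → ℝ} (hG : ∀ j x, -1 < x → x < 1 → HasDerivAt (G j) (G (j + 1) x) x)
    {N m j : ℕ} {b σ : ℝ} (hb : b ≤ 1) (h : Alt (G j) (N + m) b σ) : Alt (G (j + m)) N b σ := by
  induction m generalizing N with
  | zero => exact h
  | succ m ih =>
    have : Alt (G (j + m)) (N + 1) b σ := ih (by rwa [add_assoc, add_comm 1])
    exact this.rolle (hG (j + m)) hb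

lemma Alt.eventually {l : Filter ℝ} {g : ℝ → ℝ} {h : ℝ → ℝ → ℝ}
    (hl : ∀ x, Filter.Tendsto (fun η => h η x) l (nhds (g x)))
    {N : ℕ} {b σ : ℝ} (hA : Alt g N b σ) : ∀ᶠ η in l, Alt (h η) N b σ := by
  induction N generalizing b σ with
  | zero => exact Filter.Eventually.of_forall fun _ => trivial
  | succ N ih =>
    obtain ⟨t, h1, h2, h3, h4⟩ := hA
    filter_upwards [ih h4, ((hl t).const_mul σ).eventually_const_lt h3] with η e1 e2
    exact ⟨t, h1, h2, e2, e1⟩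

def Cross (h : ℝ → ℝ) (x0 τ : ℝ) : Prop :=
  ∀ ε > 0, ∃ l r, x0 - ε < l ∧ l < x0 ∧ x0 < r ∧ r < x0 + ε ∧ 0 < -τ * h l ∧ 0 < τ * h r

lemma Cross.of_deriv {h : ℝ → ℝ} {x0 τ η : ℝ} (h0 : h x0 = 0) (hd : HasDerivAt h η x0)
    (hτ : 0 < τ * η) : Cross h x0 τ := by
  intro ε hε
  have hd' := (hasDerivAt_iff_tendsto_slope.1 (hd.const_mul τ)).eventually_const_lt hτ
  have hL := hd'.filter_mono (nhdsWithin_mono x0 (s := Set.Iio x0) (fun y hy => ne_of_lt hy))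
  have hR := hd'.filter_mono (nhdsWithin_mono x0 (s := Set.Ioi x0) (fun y hy => ne_of_gt hy))
  obtain ⟨l, h1, h2⟩ := (hL.and (Ioo_mem_nhdsLT (by linarith : x0 - ε < x0))).exists
  obtain ⟨r, h3, h4⟩ := (hR.and (Ioo_mem_nhdsGT (by linarith : x0 < x0 + ε))).exists
  refine ⟨l, r, h2.1, h2.2, h4.1, h4.2, ?_, ?_⟩
  · rw [slope_def_field, h0, mul_zero, sub_zero, div_pos_iff] at h1
    rcases h1 with h1 | h1
    · linarith [h2.2]
    · linarith
  · rw [slope_def_field, h0, mul_zero, sub_zero, div_pos_iff] at h3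
    rcases h3 with h3 | h3
    · linarith
    · linarith [h4.1]

lemma Alt.insert {l : Filter ℝ} {g : ℝ → ℝ} {h : ℝ → ℝ → ℝ}
    (hl : ∀ x, Filter.Tendsto (fun η => h η x) l (nhds (g x))) {x0 : ℝ} (hx0 : -1 < x0) (hg : g x0 = 0)
    {N : ℕ} {b σ : ℝ} (hb : x0 < b) (hA : Alt g N b σ) :
    ∃ τ, (τ = σ ∨ τ = -σ) ∧ ∀ᶠ η in l, Cross (h η) x0 τ → Alt (h η) (N + 2) b σ := by
  induction N generalizing b σ with
  | zero =>
    refine ⟨σ, Or.inl rfl, Filter.Eventually.of_forall fun η hc => ?_⟩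
    obtain ⟨y, z, h1, h2, h3, h4, h5, h6⟩ := hc (min (x0 + 1) (b - x0)) (lt_min (by linarith) (by linarith))
    have := min_le_left (x0 + 1) (b - x0)
    have := min_le_right (x0 + 1) (b - x0)
    exact ⟨z, by linarith, by linarith, h6, y, by linarith, by linarith, h5, trivial⟩
  | succ N ih =>
    obtain ⟨t, h1, h2, h3, h4⟩ := id hA
    rcases lt_trichotomy t x0 with ht | ht | ht
    · refine ⟨σ, Or.inl rfl, ?_⟩
      filter_upwards [Alt.eventually hl h4, ((hl t).const_mul σ).eventually_const_lt h3] with η e1 e2 hc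
      obtain ⟨y, z, h1, h2, h3, h4, h5, h6⟩ := hc (min (x0 - t) (b - x0)) (lt_min (by linarith) (by linarith))
      have := min_le_left (x0 - t) (b - x0)
      have := min_le_right (x0 - t) (b - x0)
      exact ⟨z, by linarith, by linarith, h6, y, by linarith, by linarith, h5, t, by assumption,
        by linarith, by simpa using e2, by simpa using e1⟩
    · rw [ht, hg] at h3
      simp at h3
    · obtain ⟨τ, hτ, hev⟩ := ih ht h4
      refine ⟨τ, ?_, ?_⟩
      · rcases hτ with hτ | hτ
        · exact Or.inr hτ
        · left; simpa using hτ
      · filter_upwards [hev, ((hl t).const_mul σ).eventually_const_lt h3] with η e1 e2 hc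
        exact ⟨t, h1, h2, e2, e1 hc⟩

lemma Alt.of_seq {g : ℝ → ℝ} {n : ℕ} {e : ℕ → ℝ} (h1 : ∀ i, i < n → -1 < e i)
    (h2 : ∀ i, i + 1 < n → e (i + 1) < e i) (h3 : ∀ i, i < n → 0 < (-1) ^ i * g (e i))
    {m i : ℕ} (hmi : i + 1 + m = n) : Alt g m (e i) (-(-1) ^ i) := by
  induction m generalizing i with
  | zero => trivial
  | succ m ih =>
    refine ⟨e (i + 1), h1 _ (by omega), h2 _ (by omega), ?_, ?_⟩
    · have := h3 (i + 1) (by omega)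
      rwa [pow_succ, mul_neg_one] at this
    · have := ih (i := i + 1) (by omega)
      rwa [pow_succ, mul_neg_one] at this

/-- The comparison function and its derivatives. -/
noncomputable def mkG (n : ℕ) (p : ℝ[X]) (u1 u2 : ℝ) (j : ℕ) (x : ℝ) : ℝ :=
  u1 * mkT n j x + u2 * mkS n j x - (derivative^[j] p).eval x

lemma mkG_hasDerivAt (n : ℕ) (p : ℝ[X]) (u1 u2 : ℝ) (j : ℕ) (x : ℝ) (h1 : -1 < x) (h2 : x < 1) :
    HasDerivAt (mkG n p u1 u2 j) (mkG n p u1 u2 (j + 1) x) x :=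
  (((mkT_hasDerivAt n j x).const_mul u1).add ((mkS_hasDerivAt n j h1 h2).const_mul u2)).sub
    (iter_hasDerivAt p j x)

lemma alt_case_pos (n : ℕ) (hn : 1 ≤ n) (p : ℝ[X]) (hp : ∀ x ∈ Set.Icc (-1 : ℝ) 1, |p.eval x| ≤ 1)
    (u1 u2 : ℝ) (hu : 1 < u1 ^ 2 + u2 ^ 2) (hu2 : 0 < u2) : Alt (mkG n p u1 u2 1) n 1 (-1) := by
  set z : ℂ := ⟨u1, u2⟩ with hz
  set ρ := ‖z‖ with hρ
  set α := z.arg with hα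
  have e1 : ρ * Real.cos α = u1 := Complex.norm_mul_cos_arg z
  have e2 : ρ * Real.sin α = u2 := Complex.norm_mul_sin_arg z
  have hρ0 : 0 ≤ ρ := norm_nonneg z
  have hρ1 : 1 < ρ := by
    have : u1 ^ 2 + u2 ^ 2 = ρ ^ 2 := by
      rw [← e1, ← e2]; linear_combination ρ ^ 2 * Real.cos_sq_add_sin_sq α
    nlinarith
  have ha0 : 0 < α := by
    have h0 : 0 ≤ α := Complex.arg_nonneg_iff.2 hu2.le
    rcases h0.eq_or_lt with h | h
    · rw [← h] at e2; simp at e2; linarith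
    · exact h
  have haπ : α < Real.pi := by
    have h0 : α ≤ Real.pi := Complex.arg_le_pi z
    rcases h0.eq_or_lt with h | h
    · rw [h] at e2; simp at e2; linarith
    · exact h
  have hn' : (0 : ℝ) < n := by exact_mod_cast hn
  set φ : ℕ → ℝ := fun i => (α + i * Real.pi) / n with hφ
  have hφ0 : ∀ i, 0 < φ i := fun i => by
    have := Real.pi_pos
    positivity
  have hφπ : ∀ i, i < n → φ i < Real.pi := fun i hi => by
    have : (i : ℝ) + 1 ≤ n := by exact_mod_cast hi
    rw [hφ]; dsimp only
    rw [div_lt_iff₀ hn']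
    nlinarith [Real.pi_pos]
  have hφm : ∀ i, φ i < φ (i + 1) := fun i => by
    have := Real.pi_pos
    rw [hφ]; dsimp only
    push_cast
    gcongr
    linarith
  set e : ℕ → ℝ := fun i => Real.cos (φ i) with he
  have he1 : ∀ i, i < n → -1 < e i := fun i hi => by
    rw [← Real.cos_pi]
    exact Real.cos_lt_cos_of_nonneg_of_le_pi (hφ0 i).le le_rfl (hφπ i hi)
  have he1' : e 0 < 1 := by
    rw [← Real.cos_zero]
    exact Real.cos_lt_cos_of_nonneg_of_le_pi le_rfl (hφπ 0 hn).le (hφ0 0)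
  have he2 : ∀ i, i + 1 < n → e (i + 1) < e i := fun i hi =>
    Real.cos_lt_cos_of_nonneg_of_le_pi (hφ0 i).le (hφπ _ hi).le (hφm i)
  have he3 : ∀ i, i < n → 0 < (-1) ^ i * mkG n p u1 u2 0 (e i) := fun i hi => by
    have hG : mkG n p u1 u2 0 (e i) = ρ * (-1) ^ i - p.eval (e i) := by
      simp only [mkG, he]
      rw [mkT_cos, mkS_cos n (hφ0 i).le (hφπ i hi).le]
      have : (n : ℝ) * φ i = α + i * Real.pi := by rw [hφ]; field_simp
      rw [this, Real.cos_add_nat_mul_pi, Real.sin_add_nat_mul_pi, ← e1, ← e2]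
      simp only [Function.iterate_zero, id]
      linear_combination ρ * (-1) ^ i * Real.cos_sq_add_sin_sq α
    have hb := abs_le.1 (hp (e i) ⟨Real.neg_one_le_cos _, Real.cos_le_one _⟩)
    rw [hG]
    rcases neg_one_pow_eq_or ℝ i with h | h <;> rw [h] <;> linarith [hb.1, hb.2]
  have hd := mkG_hasDerivAt n p u1 u2 0
  have hA := Alt.of_seq he1 he2 he3 (m := n - 1) (i := 0) (by omega)
  have hA2 := Alt.rolle_aux hd (he1 0 hn) he1' (σ := 1) (by simpa using he3 0 hn) (by simpa using hA)
  -- the extra point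
  set q : ℝ[X] := C u1 * derivative (Chebyshev.T ℝ n) - derivative p
  obtain ⟨K, hK⟩ := isCompact_Icc.exists_bound_of_continuousOn (s := Set.Icc (-1 : ℝ) 1)
    (f := fun x => q.eval x) q.continuous.continuousOn
  obtain ⟨c, hc1, hc2, hc3, hc4⟩ := mkS_unbdd n 0 hn (-K / u2) (e 0) he1'
  obtain ⟨m, rfl⟩ : ∃ m, n = m + 1 := ⟨n - 1, by omega⟩
  refine ⟨c, hc2, hc3, ?_, ?_⟩
  · have h5 := hK c ⟨hc2.le, hc3.le⟩
    rw [Real.norm_eq_abs, abs_le] at h5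
    rw [lt_div_iff₀ hu2] at hc4
    have : mkG (m + 1) p u1 u2 1 c = q.eval c + u2 * mkS (m + 1) 1 c := by
      simp [mkG, q, mkT]
      ring
    rw [this]
    simp only [zero_add] at hc4
    linarith [h5.2]
  · simpa using hA2.mono hc1.le

lemma alt_case_zero (n : ℕ) (hn : 1 ≤ n) (p : ℝ[X]) (hp : ∀ x ∈ Set.Icc (-1 : ℝ) 1, |p.eval x| ≤ 1)
    (u1 : ℝ) (hu : 1 < u1) : Alt (mkG n p u1 0 1) n 1 1 := by
  have hn' : (0 : ℝ) < n := by exact_mod_cast hn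
  set q : ℝ[X] := C u1 * Chebyshev.T ℝ n - p
  have hq : mkG n p u1 0 1 = fun x => (derivative q).eval x := by
    funext x; simp [mkG, q, mkT]
  rw [hq]
  set e : ℕ → ℝ := fun i => Real.cos (i * Real.pi / n) with he
  have he2 : ∀ i, i + 1 ≤ n → e (i + 1) < e i := fun i hi => by
    have := Real.pi_pos
    have h2 : ((i + 1 : ℕ) : ℝ) ≤ n := by exact_mod_cast hi
    refine Real.cos_lt_cos_of_nonneg_of_le_pi (by positivity) ?_ ?_
    · rw [div_le_iff₀ hn']; nlinarith
    · push_cast; gcongr; linarith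
  have he3 : ∀ i, 0 < (-1) ^ i * q.eval (e i) := fun i => by
    have hG : q.eval (e i) = u1 * (-1) ^ i - p.eval (e i) := by
      simp only [q, he, eval_sub, eval_mul, eval_C, Chebyshev.T_real_cos]
      have : ((n : ℤ) : ℝ) * (i * Real.pi / n) = i * Real.pi := by push_cast; field_simp
      rw [this, Real.cos_nat_mul_pi]
    have hb := abs_le.1 (hp (e i) ⟨Real.neg_one_le_cos _, Real.cos_le_one _⟩)
    rw [hG]
    rcases neg_one_pow_eq_or ℝ i with h | h <;> rw [h] <;> linarith [hb.1, hb.2]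
  have main : ∀ m i, i + m = n → Alt (fun x => (derivative q).eval x) m (e i) ((-1) ^ i) := by
    intro m
    induction m with
    | zero => intro i _; trivial
    | succ m ih =>
      intro i hi
      have hlt := he2 i (by omega)
      obtain ⟨c, hc, hc'⟩ := exists_hasDerivAt_eq_slope (fun x => q.eval x) (fun x => (derivative q).eval x) hlt
        q.continuous.continuousOn (fun x _ => q.hasDerivAt x)
      have hlow : -1 ≤ e (i + 1) := Real.neg_one_le_cos _
      refine ⟨c, by linarith [hc.1], hc.2, ?_, ?_⟩
      · dsimp only
        rw [hc', ← mul_div_assoc]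
        apply div_pos _ (by linarith)
        have h1 := he3 i
        have h2 := he3 (i + 1)
        rw [pow_succ] at h2
        linarith
      · have := ih (i + 1) (by omega)
        rw [pow_succ, mul_neg_one] at this
        exact this.mono hc.1.le
  have := main n 0 (by omega)
  simpa [he] using this

lemma alt_exists (n : ℕ) (hn : 1 ≤ n) (p : ℝ[X]) (hp : ∀ x ∈ Set.Icc (-1 : ℝ) 1, |p.eval x| ≤ 1)
    (u1 u2 : ℝ) (hu : 1 < u1 ^ 2 + u2 ^ 2) :
    ∃ σ, (σ = 1 ∨ σ = -1) ∧ Alt (mkG n p u1 u2 1) n 1 σ := by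
  have hneg : mkG n p u1 u2 1 = fun x => -mkG n (-p) (-u1) (-u2) 1 x := by
    funext x; simp [mkG]; ring
  have hp' : ∀ x ∈ Set.Icc (-1 : ℝ) 1, |(-p).eval x| ≤ 1 := by simpa using hp
  rcases lt_trichotomy u2 0 with h | h | h
  · refine ⟨1, Or.inl rfl, ?_⟩
    rw [hneg]
    simpa using (alt_case_pos n hn (-p) hp' (-u1) (-u2) (by simpa using hu) (by linarith)).neg
  · subst h
    rcases lt_or_ge u1 0 with h' | h'
    · refine ⟨-1, Or.inr rfl, ?_⟩
      rw [hneg]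
      rw [neg_zero]
      exact (alt_case_zero n hn (-p) hp' (-u1) (by nlinarith)).neg
    · exact ⟨1, Or.inl rfl, alt_case_zero n hn p hp u1 (by nlinarith)⟩
  · exact ⟨-1, Or.inr rfl, alt_case_pos n hn p hp u1 u2 hu h⟩

lemma claimM (n k : ℕ) (hk : 1 ≤ k) (hkn : k ≤ n) (p : ℝ[X]) (hdeg : p.natDegree ≤ n)
    (hp : ∀ x ∈ Set.Icc (-1 : ℝ) 1, |p.eval x| ≤ 1) (x0 : ℝ) (h1 : -1 < x0) (h2 : x0 < 1) :
    (derivative^[k] p).eval x0 ^ 2 ≤ mkE n k x0 := by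
  by_contra hcon
  push Not at hcon
  have hW := (mkW_neg n k (by omega) hkn h1 h2).ne
  set W := mkW n k x0 with hWd
  set a := (derivative^[k] p).eval x0 with ha
  set c := (derivative^[k + 1] p).eval x0 with hc
  set u1 : ℝ → ℝ := fun η => (a * mkS n (k + 1) x0 - (c + η) * mkS n k x0) / W with hu1
  set u2 : ℝ → ℝ := fun η => ((c + η) * mkT n k x0 - a * mkT n (k + 1) x0) / W with hu2
  have hWe : mkT n k x0 * mkS n (k + 1) x0 - mkS n k x0 * mkT n (k + 1) x0 = W := rfl
  have E1 : ∀ η, u1 η * mkT n k x0 + u2 η * mkS n k x0 = a := by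
    intro η
    simp only [hu1, hu2]
    field_simp
    rw [← hWe]; ring
  have E2 : ∀ η, u1 η * mkT n (k + 1) x0 + u2 η * mkS n (k + 1) x0 = c + η := by
    intro η
    simp only [hu1, hu2]
    field_simp
    rw [← hWe]; ring
  have hu : 1 < u1 0 ^ 2 + u2 0 ^ 2 := by
    by_contra hle
    push Not at hle
    rw [← E1 0, mkE] at hcon
    nlinarith [sq_nonneg (u1 0 * mkS n k x0 - u2 0 * mkT n k x0), sq_nonneg (mkS n k x0), sq_nonneg (mkT n k x0)]
  obtain ⟨σ, hσ, hA⟩ := alt_exists n (by omega) p hp (u1 0) (u2 0) hu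
  have hA2 : Alt (mkG n p (u1 0) (u2 0) k) (n + 1 - k) 1 σ := by
    have := Alt.rolle_iter (mkG_hasDerivAt n p (u1 0) (u2 0)) (N := n + 1 - k) (m := k - 1) (j := 1) le_rfl
      (by rwa [show n + 1 - k + (k - 1) = n by omega])
    rwa [show 1 + (k - 1) = k by omega] at this
  have hcont : ∀ x, Filter.Tendsto (fun η => mkG n p (u1 η) (u2 η) k x) (nhds 0)
      (nhds (mkG n p (u1 0) (u2 0) k x)) := by
    intro x
    have : Continuous (fun η => mkG n p (u1 η) (u2 η) k x) := by
      simp only [mkG, hu1, hu2]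
      fun_prop
    exact this.tendsto 0
  have hG0 : ∀ η, mkG n p (u1 η) (u2 η) k x0 = 0 := fun η => by
    simp only [mkG]; rw [E1]; exact sub_self _
  obtain ⟨τ, hτ, hev⟩ := Alt.insert (h := fun η => mkG n p (u1 η) (u2 η) k) hcont h1 (hG0 0) h2 hA2
  obtain ⟨ε, hε, hev⟩ := Metric.eventually_nhds_iff.1 hev
  have hτ1 : |τ| = 1 := by
    rcases hτ with rfl | rfl <;> rcases hσ with rfl | rfl <;> simp
  have hτ2 : τ * τ = 1 := by rw [← abs_mul_abs_self, hτ1]; norm_num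
  have hcross : Cross (mkG n p (u1 (τ * (ε / 2))) (u2 (τ * (ε / 2))) k) x0 τ := by
    refine Cross.of_deriv (hG0 _) (mkG_hasDerivAt n p _ _ k x0 h1 h2) ?_
    have : mkG n p (u1 (τ * (ε / 2))) (u2 (τ * (ε / 2))) (k + 1) x0 = τ * (ε / 2) := by
      simp only [mkG]; rw [E2]; ring
    rw [this, ← mul_assoc, hτ2]
    linarith
  have hA3 := hev (y := τ * (ε / 2)) (by
    rw [Real.dist_eq, sub_zero, abs_mul, hτ1, abs_of_pos (by linarith)]; linarith) hcross
  have hA4 := Alt.rolle_iter (mkG_hasDerivAt n p (u1 (τ * (ε / 2))) (u2 (τ * (ε / 2))))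
    (N := 2) (m := n + 1 - k) (j := k) le_rfl (by rwa [add_comm])
  rw [show k + (n + 1 - k) = n + 1 by omega] at hA4
  obtain ⟨c0, hc0⟩ := mkS_const n
  have hG : ∀ x, mkG n p (u1 (τ * (ε / 2))) (u2 (τ * (ε / 2))) (n + 1) x
      = (u2 (τ * (ε / 2)) * c0) * (√(1 - x ^ 2) / (1 - x ^ 2) ^ (n + 1)) := by
    intro x
    have z1 : derivative^[n + 1] p = 0 := iterate_derivative_eq_zero (by omega)
    have z2 : derivative^[n + 1] (Chebyshev.T ℝ n) = 0 := iterate_derivative_eq_zero (by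
      rw [Chebyshev.natDegree_T]; simp)
    simp only [mkG, mkT, z1, z2, hc0]
    simp
    ring
  obtain ⟨t, t1, t2, t3, s, s1, s2, s3, -⟩ := hA4
  rw [hG] at t3 s3
  have P : ∀ x : ℝ, -1 < x → x < 1 → 0 < √(1 - x ^ 2) / (1 - x ^ 2) ^ (n + 1) := fun x hx1 hx2 => by
    have hs := s_pos hx1 hx2
    have := Real.sqrt_pos.2 hs
    positivity
  rw [← mul_assoc] at t3 s3
  have t4 := pos_of_mul_pos_left t3 (P t t1 t2).le
  have s4 := pos_of_mul_pos_left s3 (P s s1 (by linarith)).le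
  linarith

/-- For `1 ≤ k ≤ n`, `T_n^{(j)}` is positive on `[1,∞)`. -/
lemma mkT_pos_of_one_le (n j : ℕ) (hj : j ≤ n) (x : ℝ) (hx : 1 ≤ x) : 0 < mkT n j x := by
  have h := Chebyshev.eval_iterate_derivative_le_of_forall_abs_le_one (n := n) (k := j) (P := X ^ j) hx
    (by rw [degree_X_pow]; exact_mod_cast hj) (by
      intro y hy
      rw [eval_pow, eval_X, abs_pow]
      exact pow_le_one₀ (abs_nonneg _) (abs_le.2 (by simpa using hy)))
  refine lt_of_lt_of_le ?_ h
  rw [iterate_derivative_X_pow_eq_smul]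
  simp
  
lemma mkT_le_one (n j : ℕ) (x : ℝ) (hx : |x| ≤ 1) : |mkT n j x| ≤ mkT n j 1 :=
  Chebyshev.abs_iterate_derivative_T_real_le n j hx

lemma interp_exists (a : ℝ) (ha : 0 < a) (s : Finset ℝ) (P : ℝ[X]) (hP : P.degree < s.card)
    (h : ∀ z ∈ s, |P.eval z| ≤ |(derivative (C a * Lagrange.nodal s id)).eval z|) :
    ∃ c : ℝ → ℝ, (∀ z ∈ s, |c z| ≤ 1) ∧
      P = ∑ z ∈ s, C (c z) * (C a * Lagrange.nodal (s.erase z) id) := by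
  have hd : ∀ z ∈ s, (derivative (C a * Lagrange.nodal s id)).eval z =
      (C a * Lagrange.nodal (s.erase z) id).eval z := by
    intro z hz
    have := Lagrange.eval_nodal_derivative_eval_node_eq (v := (id : ℝ → ℝ)) hz
    simp only [id] at this
    rw [derivative_C_mul, eval_C_mul, eval_C_mul]
    congr 1
  have hne : ∀ z ∈ s, (C a * Lagrange.nodal (s.erase z) id).eval z ≠ 0 := by
    intro z hz
    rw [eval_C_mul, Lagrange.eval_nodal]
    refine mul_ne_zero ha.ne' (Finset.prod_ne_zero_iff.2 fun w hw => ?_)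
    exact sub_ne_zero.2 (Finset.ne_of_mem_erase hw).symm
  refine ⟨fun z => P.eval z / (C a * Lagrange.nodal (s.erase z) id).eval z, ?_, ?_⟩
  · intro z hz
    rw [abs_div, div_le_one (abs_pos.2 (hne z hz)), ← hd z hz]
    exact h z hz
  · refine eq_of_degrees_lt_of_eval_finset_eq s hP ?_ ?_
    · refine (degree_sum_le _ _).trans_lt ?_
      rw [Finset.sup_lt_iff (WithBot.bot_lt_coe _)]
      intro z hz
      rw [← mul_assoc, ← C_mul, ← smul_eq_C_mul]
      refine (degree_smul_le _ _).trans_lt ?_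
      rw [Lagrange.degree_nodal]
      exact_mod_cast Finset.card_erase_lt_of_mem hz
    · intro z hz
      rw [eval_finsetSum, Finset.sum_eq_single z]
      · rw [eval_C_mul, div_mul_cancel₀ _ (hne z hz)]
      · intro w hw hwz
        have := Lagrange.eval_nodal_at_node (v := (id : ℝ → ℝ)) (Finset.mem_erase.2 ⟨hwz.symm, hz⟩)
        simp only [id] at this
        rw [eval_C_mul, eval_C_mul]
        erw [this]
        simp
      · intro h; exact absurd hz h

lemma deriv_nodal (a : ℝ) (s : Finset ℝ) : derivative (C a * Lagrange.nodal s id) =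
    ∑ z ∈ s, (C a * Lagrange.nodal (s.erase z) id) := by
  rw [derivative_C_mul, Lagrange.derivative_nodal, Finset.mul_sum]

lemma transfer_right (a : ℝ) (ha : 0 < a) (s : Finset ℝ) (P : ℝ[X]) (hP : P.degree < s.card)
    (h : ∀ z ∈ s, |P.eval z| ≤ |(derivative (C a * Lagrange.nodal s id)).eval z|)
    (x : ℝ) (hx : ∀ z ∈ s, z ≤ x) :
    |P.eval x| ≤ (derivative (C a * Lagrange.nodal s id)).eval x := by
  obtain ⟨c, hc, hPe⟩ := interp_exists a ha s P hP h
  rw [hPe, deriv_nodal, eval_finsetSum, eval_finsetSum]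
  refine (Finset.abs_sum_le_sum_abs _ _).trans (Finset.sum_le_sum fun z hz => ?_)
  have h0 : 0 ≤ (C a * Lagrange.nodal (s.erase z) id).eval x := by
    rw [eval_C_mul, Lagrange.eval_nodal]
    refine mul_nonneg ha.le (Finset.prod_nonneg fun w hw => ?_)
    exact sub_nonneg.2 (hx w (Finset.mem_of_mem_erase hw))
  rw [eval_C_mul, abs_mul, abs_of_nonneg h0]
  nlinarith [hc z hz]

lemma transfer_root (a : ℝ) (ha : 0 < a) (s : Finset ℝ) (P : ℝ[X]) (hP : P.degree < s.card)
    (h : ∀ z ∈ s, |P.eval z| ≤ |(derivative (C a * Lagrange.nodal s id)).eval z|)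
    (y : ℝ) (hy : (derivative (C a * Lagrange.nodal s id)).eval y = 0) :
    |(derivative P).eval y| ≤ |(derivative (derivative (C a * Lagrange.nodal s id))).eval y| := by
  obtain ⟨c, hc, hPe⟩ := interp_exists a ha s P hP h
  set Q := C a * Lagrange.nodal s id with hQ
  have hfac : ∀ z ∈ s, Q = (X - C z) * (C a * Lagrange.nodal (s.erase z) id) := by
    intro z hz
    rw [hQ, Lagrange.nodal_eq_mul_nodal_erase hz]
    simp only [id]
    ring
  have hyz : ∀ z ∈ s, y ≠ z := by
    rintro z hz rfl
    rw [hfac y hz, derivative_mul] at hy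
    simp [Lagrange.eval_nodal, ha.ne', Finset.prod_eq_zero_iff, sub_eq_zero] at hy
  have hval : ∀ z ∈ s, (derivative (C a * Lagrange.nodal (s.erase z) id)).eval y =
      -Q.eval y * ((y - z) ^ 2)⁻¹ := by
    intro z hz
    have h1 := hfac z hz
    have h2 := (congrArg (eval y) h1).trans (eval_mul ..)
    have h3 := congrArg (fun q => (derivative q).eval y) h1
    simp only [derivative_mul (f := X - C z)] at h3
    rw [hy] at h3
    simp only [eval_add, eval_mul (p := derivative (X - C z)), eval_mul (p := X - C z)] at h3
    have h5 : (y - z) ≠ 0 := sub_ne_zero.2 (hyz z hz)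
    rw [eq_mul_inv_iff_mul_eq₀ (pow_ne_zero 2 h5)]
    simp only [derivative_sub, derivative_X, derivative_C, sub_zero, eval_one, eval_sub, eval_X, eval_C] at h2 h3
    linear_combination h2 - (y - z) * h3
  have hQ2 : (derivative (derivative Q)).eval y = -Q.eval y * ∑ z ∈ s, ((y - z) ^ 2)⁻¹ := by
    rw [hQ, deriv_nodal, ← hQ, derivative_sum, eval_finsetSum, Finset.mul_sum]
    exact Finset.sum_congr rfl fun z hz => hval z hz
  rw [hQ2, abs_mul, abs_of_nonneg (Finset.sum_nonneg fun z _ => by positivity : 0 ≤ ∑ z ∈ s, ((y - z) ^ 2)⁻¹),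
    hPe, derivative_sum, eval_finsetSum, Finset.mul_sum]
  refine (Finset.abs_sum_le_sum_abs _ _).trans (Finset.sum_le_sum fun z hz => ?_)
  rw [derivative_C_mul, eval_C_mul, hval z hz, abs_mul, abs_mul, abs_of_nonneg (by positivity : 0 ≤ ((y - z) ^ 2)⁻¹)]
  have : 0 ≤ |-Q.eval y| * ((y - z) ^ 2)⁻¹ := by positivity
  nlinarith [hc z hz]

lemma T_card (n j : ℕ) : n ≤ (derivative^[j] (Chebyshev.T ℝ n)).roots.toFinset.card + j := by
  induction j with
  | zero =>
    rw [Function.iterate_zero, id, Chebyshev.roots_T_real]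
    simp only [Finset.val_toFinset, add_zero]
    rw [Finset.card_image_of_injOn ((Finset.range n).nodup_map_iff_injOn.mp (Chebyshev.roots_T_real_nodup n))]
    simp
  | succ j ih =>
    have := card_roots_toFinset_le_derivative (derivative^[j] (Chebyshev.T ℝ n))
    rw [Function.iterate_succ_apply']
    omega

lemma T_factor (n j : ℕ) (hj : j ≤ n) : ∃ (a : ℝ) (s : Finset ℝ), 0 < a ∧ s.card = n - j ∧
    derivative^[j] (Chebyshev.T ℝ n) = C a * Lagrange.nodal s id ∧ ∀ z ∈ s, mkT n j z = 0 := by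
  set Q := derivative^[j] (Chebyshev.T ℝ n) with hQ
  have h1 := T_card n j
  have h2 : Q.natDegree ≤ n - j := by
    have := natDegree_iterate_derivative (Chebyshev.T ℝ n) j
    rw [Chebyshev.natDegree_T] at this
    simpa using this
  have h3 := Q.card_roots'
  have h4 := Multiset.toFinset_card_le Q.roots
  rw [← hQ] at h1
  have hnd : Q.roots.Nodup := Multiset.toFinset_card_eq_card_iff_nodup.1 (by omega)
  have hfac := C_leadingCoeff_mul_prod_multiset_X_sub_C (p := Q) (by omega)
  have hfac2 : Q = C Q.leadingCoeff * Lagrange.nodal Q.roots.toFinset id := by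
    conv_lhs => rw [← hfac]
    rw [Lagrange.nodal, Finset.prod, Multiset.toFinset_val, hnd.dedup]
    rfl
  have hroot : ∀ z ∈ Q.roots.toFinset, mkT n j z = 0 := by
    intro z hz
    rw [Multiset.mem_toFinset] at hz
    exact isRoot_of_mem_roots hz
  refine ⟨Q.leadingCoeff, Q.roots.toFinset, ?_, by omega, hfac2, hroot⟩
  have hp := mkT_pos_of_one_le n j hj 1 le_rfl
  have e : mkT n j 1 = Q.leadingCoeff * (Lagrange.nodal Q.roots.toFinset id).eval 1 := by
    rw [← eval_C_mul, ← hfac2]; rfl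
  rw [e] at hp
  refine pos_of_mul_pos_left hp ?_
  rw [Lagrange.eval_nodal]
  refine Finset.prod_nonneg fun z hz => ?_
  by_contra hc
  push Not at hc
  simp only [id] at hc
  have := mkT_pos_of_one_le n j hj z (by linarith)
  rw [hroot z hz] at this
  exact lt_irrefl _ this

lemma deg_lt (n j : ℕ) (hj : j < n) (p : ℝ[X]) (hdeg : p.natDegree ≤ n) :
    (derivative^[j + 1] p).degree < ((n - j : ℕ) : WithBot ℕ) := by
  have := natDegree_iterate_derivative p (j + 1)
  refine degree_le_natDegree.trans_lt ?_
  exact_mod_cast (by omega : (derivative^[j + 1] p).natDegree < n - j)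

lemma root_bound (n j : ℕ) (hj : j < n) (p : ℝ[X]) (hdeg : p.natDegree ≤ n)
    (hp : ∀ x ∈ Set.Icc (-1 : ℝ) 1, |p.eval x| ≤ 1) (z : ℝ) (hz : mkT n j z = 0) :
    |(derivative^[j + 1] p).eval z| ≤ |mkT n (j + 1) z| := by
  induction j generalizing z with
  | zero =>
    have hm : z ∈ (Chebyshev.T ℝ n).roots := (mem_roots (Chebyshev.T_ne_zero ℝ n)).2 hz
    rw [Chebyshev.roots_T_real, Finset.mem_val, Finset.mem_image] at hm
    obtain ⟨k, -, hk⟩ := hm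
    have h1 : -1 ≤ z := hk ▸ Real.neg_one_le_cos _
    have h2 : z ≤ 1 := hk ▸ Real.cos_le_one _
    have h1' : -1 < z := by
      refine lt_of_le_of_ne h1 ?_
      rintro rfl
      have := mkT_cos n Real.pi
      rw [Real.cos_pi, hz, Real.cos_nat_mul_pi] at this
      exact (pow_ne_zero n (by norm_num : (-1 : ℝ) ≠ 0)) this.symm
    have h2' : z < 1 := by
      refine lt_of_le_of_ne h2 ?_
      rintro rfl
      exact (mkT_pos_of_one_le n 0 (by omega) 1 le_rfl).ne' hz
    have := claimM n 1 le_rfl (by omega) p hdeg hp z h1' h2'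
    rw [mkE, mkS_one n h1' h2', hz] at this
    simp only [mul_zero, zero_div, ne_eq, OfNat.ofNat_ne_zero, not_false_eq_true, zero_pow, add_zero] at this
    exact sq_le_sq.1 this
  | succ j ih =>
    obtain ⟨a, s, ha, hs, hf, hr⟩ := T_factor n j (by omega)
    have hT1 : derivative^[j + 1] (Chebyshev.T ℝ n) = derivative (C a * Lagrange.nodal s id) := by
      rw [Function.iterate_succ_apply', hf]
    have hT2 : derivative^[j + 1 + 1] (Chebyshev.T ℝ n) = derivative (derivative (C a * Lagrange.nodal s id)) := by
      rw [Function.iterate_succ_apply', hT1]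
    have := transfer_root a ha s (derivative^[j + 1] p) (by rw [hs]; exact deg_lt n j (by omega) p hdeg)
      (fun w hw => by
        rw [← hT1]
        exact ih (by omega) w (hr w hw)) z (by rw [← hT1]; exact hz)
    rw [← hT2, ← Function.iterate_succ_apply' derivative] at this
    exact this

lemma bound_nonneg (n k : ℕ) (hk : k < n) (p : ℝ[X]) (hdeg : p.natDegree ≤ n)
    (hp : ∀ x ∈ Set.Icc (-1 : ℝ) 1, |p.eval x| ≤ 1) (x : ℝ) (hx0 : 0 ≤ x) (hx1 : x ≤ 1) :
    |(derivative^[k + 1] p).eval x| ≤ mkT n (k + 1) 1 := by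
  obtain ⟨a, s, ha, hs, hf, hr⟩ := T_factor n k (by omega)
  have hT1 : derivative^[k + 1] (Chebyshev.T ℝ n) = derivative (C a * Lagrange.nodal s id) := by
    rw [Function.iterate_succ_apply', hf]
  by_cases hall : ∀ z ∈ s, z ≤ x
  · have := transfer_right a ha s (derivative^[k + 1] p) (by rw [hs]; exact deg_lt n k hk p hdeg)
      (fun w hw => by
        rw [← hT1]
        exact root_bound n k hk p hdeg hp w (hr w hw)) x hall
    rw [← hT1] at this
    exact this.trans ((le_abs_self _).trans (mkT_le_one n (k + 1) x (abs_le.2 ⟨by linarith, hx1⟩)))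
  · push Not at hall
    obtain ⟨z, hz, hxz⟩ := hall
    obtain ⟨y, hy, hmax⟩ := s.exists_max_image id ⟨z, hz⟩
    simp only [id] at hmax
    have hxy : x < y := hxz.trans_le (hmax z hz)
    have hTy := hr y hy
    have hy1 : y < 1 := by
      by_contra hc
      push Not at hc
      exact (mkT_pos_of_one_le n k (by omega) y hc).ne' hTy
    have hT' : 0 ≤ mkT n (k + 1) y := by
      have : mkT n (k + 1) y = (derivative (C a * Lagrange.nodal s id)).eval y := by rw [← hT1]; rfl
      rw [this, deriv_nodal, eval_finsetSum]
      refine Finset.sum_nonneg fun w hw => ?_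
      rw [eval_C_mul, Lagrange.eval_nodal]
      refine mul_nonneg ha.le (Finset.prod_nonneg fun v hv => ?_)
      exact sub_nonneg.2 (hmax v (Finset.mem_of_mem_erase hv))
    have hW := mkW_neg n k (by omega) (by omega) (by linarith : -1 < y) hy1
    have hC := mkC_nonneg n k (by omega) (by linarith : 0 ≤ y) hy1
    rw [mkW, hTy] at hW
    rw [mkC, hTy] at hC
    have hS : 0 < mkS n k y := by
      by_contra hc
      push Not at hc
      nlinarith [mul_nonneg (neg_nonneg.2 hc) hT']
    have hS1 : 0 ≤ mkS n (k + 1) y := by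
      by_contra hc
      push Not at hc
      nlinarith [mul_pos hS (neg_pos.2 hc)]
    obtain ⟨w, hw1, -, hw2, hw3⟩ := mkS_unbdd n k (by omega) 0 y hy1
    have hcont : ContinuousOn (mkS n (k + 1)) (Set.Icc y w) := fun v hv =>
      (mkS_hasDerivAt n (k + 1) (by linarith [hv.1]) (by linarith [hv.2])).continuousAt.continuousWithinAt
    obtain ⟨v, hv, hv0⟩ := intermediate_value_Icc' hw1.le hcont ⟨hw3.le, hS1⟩
    have hv1 : v < 1 := hv.2.trans_lt hw2
    have hvx : x ≤ v := hxy.le.trans hv.1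
    have h1 := claimM n (k + 1) (by omega) hk p hdeg hp x (by linarith) (by linarith)
    have h2 := mkE_mono n (k + 1) (by omega) hk hx0 hvx hv1
    have h3 := mkT_le_one n (k + 1) v (abs_le.2 ⟨by linarith, hv1.le⟩)
    have h4 : mkE n (k + 1) v = mkT n (k + 1) v ^ 2 := by rw [mkE, hv0]; ring
    exact (sq_le_sq.1 (h1.trans (h2.trans h4.le))).trans h3

lemma iter_comp_neg (p : ℝ[X]) (k : ℕ) (x : ℝ) :
    |(derivative^[k] (p.comp (-X))).eval x| = |(derivative^[k] p).eval (-x)| := by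
  have : derivative^[k] (p.comp (-X)) = (-1) ^ k * (derivative^[k] p).comp (-X) := by
    induction k with
    | zero => simp
    | succ k ih =>
      rw [Function.iterate_succ_apply', ih, Function.iterate_succ_apply']
      have : ((-1 : ℝ[X]) ^ k) = C ((-1) ^ k) := by simp
      rw [this, derivative_C_mul, derivative_comp]
      simp
      ring
  rw [this]
  simp [abs_mul]

lemma bound_all (n k : ℕ) (hk : k < n) (p : ℝ[X]) (hdeg : p.natDegree ≤ n)
    (hp : ∀ x ∈ Set.Icc (-1 : ℝ) 1, |p.eval x| ≤ 1) (x : ℝ) (hx : x ∈ Set.Icc (-1 : ℝ) 1) :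
    |(derivative^[k + 1] p).eval x| ≤ mkT n (k + 1) 1 := by
  rcases le_total 0 x with h | h
  · exact bound_nonneg n k hk p hdeg hp x h hx.2
  · have := bound_nonneg n k hk (p.comp (-X)) (by rw [natDegree_comp]; simpa using hdeg)
      (fun y hy => by simpa using hp (-y) ⟨by linarith [hy.2], by linarith [hy.1]⟩) (-x) (by linarith) (by linarith [hx.1])
    rwa [iter_comp_neg, neg_neg] at this

lemma markovConst_eq (d k : ℕ) : markovConst d k = mkT d k 1 := by
  have := Chebyshev.iterate_derivative_T_eval_one_eq_div (𝔽 := ℝ) d k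
  rw [mkT, this, markovConst]
  push_cast
  simp

lemma bound_M (n k : ℕ) (hk : k < n) (p : ℝ[X]) (hdeg : p.natDegree ≤ n) (M : ℝ)
    (hp : ∀ x ∈ Set.Icc (-1 : ℝ) 1, |p.eval x| ≤ M) (x : ℝ) (hx : x ∈ Set.Icc (-1 : ℝ) 1) :
    |(derivative^[k + 1] p).eval x| ≤ mkT n (k + 1) 1 * M := by
  have hM : 0 ≤ M := (abs_nonneg _).trans (hp x hx)
  rcases hM.eq_or_lt with h | h
  · have : p = 0 := by
      refine eq_zero_of_infinite_isRoot p ((Set.Icc_infinite (by norm_num : (-1 : ℝ) < 1)).mono ?_)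
      intro y hy
      have := hp y hy
      rw [← h] at this
      exact abs_eq_zero.1 (le_antisymm this (abs_nonneg _))
    rw [this, ← h]
    simp
  · have := bound_all n k hk (C M⁻¹ * p) ((natDegree_C_mul_le _ _).trans hdeg) (fun y hy => by
      rw [eval_C_mul, abs_mul, abs_of_pos (inv_pos.2 h), inv_mul_le_one₀ h]
      exact hp y hy) x hx
    rw [iterate_derivative_C_mul, eval_C_mul, abs_mul, abs_of_pos (inv_pos.2 h), inv_mul_le_iff₀ h] at this
    linarith

/-- Markov brothers' inequality on `[-1,1]`. -/
theorem markov_brothers_inequality (d k : ℕ) (p : Polynomial ℝ) (hp : p.natDegree ≤ d) :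
    sSup ((fun x => |(Polynomial.derivative^[k] p).eval x|) '' Set.Icc (-1 : ℝ) 1) ≤
      markovConst d k * sSup ((fun x => |p.eval x|) '' Set.Icc (-1 : ℝ) 1) := by
  have hbdd : BddAbove ((fun x => |p.eval x|) '' Set.Icc (-1 : ℝ) 1) :=
    isCompact_Icc.bddAbove_image p.continuous.abs.continuousOn
  have hM : ∀ x ∈ Set.Icc (-1 : ℝ) 1, |p.eval x| ≤ sSup ((fun x => |p.eval x|) '' Set.Icc (-1 : ℝ) 1) :=
    fun x hx => le_csSup hbdd ⟨x, hx, rfl⟩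
  refine csSup_le ⟨_, 0, by norm_num, rfl⟩ ?_
  rintro _ ⟨x, hx, rfl⟩
  dsimp only
  rcases k with _ | k
  · simpa [markovConst] using hM x hx
  · rw [markovConst_eq]
    rcases lt_or_ge k d with h | h
    · exact bound_M d k h p hp _ hM x hx
    · have z1 : derivative^[k + 1] p = 0 := iterate_derivative_eq_zero (by omega)
      have z2 : derivative^[k + 1] (Chebyshev.T ℝ d) = 0 := iterate_derivative_eq_zero (by
        rw [Chebyshev.natDegree_T]; simp; omega)
      simp [mkT, z1, z2]
end

section
/- Let d ∈ ℕ, let 0 < a < b be real numbers, let ε > 0, and let p ∈ ℝ[X] be a polynomial of degree at most d such that |p(x)| ≤ ε for all x ∈ [a,b]. Then for every x ∈ [0,a], |p(x)| ≤ ε · ∑_{k=0}^{d} (2/(b−a))^k · a^k · C_M(d,k) / k!, where C_M(d,k) = (∏_{j=0}^{k−1} (d² − j²)) / (∏_{j=0}^{k−1} (2j+1)). -/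
/-- Taylor expansion of the Chebyshev polynomial at `1`. -/
lemma eval_T_one_add (d : ℕ) (t : ℝ) :
    (Polynomial.Chebyshev.T ℝ d).eval (t + 1) =
      ∑ k ∈ Finset.range (d + 1), t ^ k * markovConst d k / (Nat.factorial k) := by
  rw [← Polynomial.taylor_eval, Polynomial.eval_eq_sum_range' (n := d + 1)
    (by rw [Polynomial.natDegree_taylor, Polynomial.Chebyshev.natDegree_T]; simp)]
  refine Finset.sum_congr rfl fun k _ => ?_
  have h1 : (Nat.factorial k : ℝ) * (Polynomial.taylor 1 (Polynomial.Chebyshev.T ℝ d)).coeff k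
      = markovConst d k := by
    have h2 := Polynomial.Chebyshev.iterate_derivative_T_eval_one_eq_div (𝔽 := ℝ) d k
    rw [← Polynomial.factorial_smul_hasseDeriv] at h2
    rw [Polynomial.taylor_coeff, markovConst]
    simpa using h2
  rw [← h1]
  have : (Nat.factorial k : ℝ) ≠ 0 := by positivity
  field_simp

lemma markovConst_nonneg {d k : ℕ} (h : k ≤ d) : 0 ≤ markovConst d k := by
  refine div_nonneg (Finset.prod_nonneg fun j hj => ?_) (Finset.prod_nonneg fun j hj => by positivity)
  have : (j : ℝ) ≤ d := by
    have := Finset.mem_range.mp hj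
    exact_mod_cast (by omega : j ≤ d)
  have : (j : ℝ) ^ 2 ≤ (d : ℝ) ^ 2 := by gcongr
  linarith

/-- One-sided version of the extrapolation bound. -/
lemma one_sided (d : ℕ) (a b : ℝ) (hab : a < b)
    (ε : ℝ) (hε : 0 < ε) (p : Polynomial ℝ) (hp : p.natDegree ≤ d)
    (hsmall : ∀ x ∈ Set.Icc a b, |p.eval x| ≤ ε) (x : ℝ) (hx : x ≤ a) :
    p.eval x ≤ ε * (Polynomial.Chebyshev.T ℝ d).eval (2 / (b - a) * (a - x) + 1) := by
  have hba : 0 < b - a := by linarith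
  set q : Polynomial ℝ := Polynomial.C ε⁻¹ *
    p.comp (Polynomial.C (-((b - a) / 2)) * Polynomial.X + Polynomial.C ((a + b) / 2)) with hq
  have hqe : ∀ y, q.eval y = ε⁻¹ * p.eval (-((b - a) / 2) * y + (a + b) / 2) := by
    intro y; simp [hq]
  have hdeg : q.degree ≤ d := by
    refine Polynomial.degree_le_of_natDegree_le ?_
    refine (Polynomial.natDegree_C_mul_le _ _).trans (Polynomial.natDegree_comp_le.trans ?_)
    calc _ ≤ p.natDegree * 1 := by gcongr; exact Polynomial.natDegree_linear_le
      _ ≤ d := by simpa using hp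
  have hbnd : ∀ y ∈ Set.Icc (-1 : ℝ) 1, |q.eval y| ≤ 1 := by
    intro y hy
    rw [hqe, abs_mul, abs_of_pos (inv_pos.mpr hε), inv_mul_le_iff₀ hε, mul_one]
    apply hsmall
    constructor <;> nlinarith [hy.1, hy.2]
  have ht : 0 ≤ 2 / (b - a) * (a - x) := mul_nonneg (by positivity) (by linarith)
  have key := Polynomial.Chebyshev.eval_iterate_derivative_le_of_forall_abs_le_one (k := 0)
    (x := 2 / (b - a) * (a - x) + 1) (by linarith) hdeg hbnd
  simp only [Function.iterate_zero, id_eq] at key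
  rw [hqe, inv_mul_le_iff₀ hε] at key
  have hxy : -((b - a) / 2) * (2 / (b - a) * (a - x) + 1) + (a + b) / 2 = x := by
    field_simp
    ring
  rwa [hxy] at key

/-- A polynomial that is small on `[a,b]` stays controlled on `[0,a]`. -/
theorem small_on_interval_extrapolation (d : ℕ) (a b : ℝ) (ha : 0 < a) (hab : a < b)
    (ε : ℝ) (hε : 0 < ε) (p : Polynomial ℝ) (hp : p.natDegree ≤ d)
    (hsmall : ∀ x ∈ Set.Icc a b, |p.eval x| ≤ ε) :
    ∀ x ∈ Set.Icc (0 : ℝ) a,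
      |p.eval x| ≤ ε * ∑ k ∈ Finset.range (d + 1),
        (2 / (b - a)) ^ k * a ^ k * markovConst d k / (Nat.factorial k) := by
  intro x hx
  have hba : 0 < b - a := by linarith
  have h1 := one_sided d a b hab ε hε p hp hsmall x hx.2
  have h2 := one_sided d a b hab ε hε (-p) (by simpa using hp) (by simpa using hsmall) x hx.2
  rw [Polynomial.eval_neg] at h2
  refine (abs_le'.mpr ⟨h1, h2⟩).trans ?_
  rw [eval_T_one_add]
  gcongr with k hk
  · exact markovConst_nonneg (by have := Finset.mem_range.mp hk; omega)
  · rw [mul_pow]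
    have : 0 ≤ a - x := by linarith [hx.2]
    gcongr
    linarith [hx.1]
end

section
/- Let d ∈ ℕ, let 0 < a < b be real numbers, let ε > 0, and let p ∈ ℝ[X] be a polynomial of degree at most d such that |p(x)| ≤ ε for all x ∈ [a,b]. Then the derivative of p at 0 satisfies |p'(0)| ≤ ε · ∑_{k=1}^{d} (2/(b−a))^k · a^{k−1} · C_M(d,k) / (k−1)!, where C_M(d,k) = (∏_{j=0}^{k−1} (d² − j²)) / (∏_{j=0}^{k−1} (2j+1)). -/
open Polynomial in
lemma iterate_derivative_T_one_eq_markovConst (d k : ℕ) :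
    (derivative^[k] (Chebyshev.T ℝ d)).eval 1 = markovConst d k := by
  have h := Chebyshev.iterate_derivative_T_eval_one (R := ℝ) (d : ℤ) k
  have hpos : (0 : ℝ) < ∏ j ∈ Finset.range k, (2 * (j : ℝ) + 1) :=
    Finset.prod_pos fun j _ => by positivity
  rw [markovConst, eq_div_iff hpos.ne', mul_comm]
  push_cast at h
  exact h

open Polynomial in
lemma eval_derivative_T_one_add (d : ℕ) (hd : 1 ≤ d) (s : ℝ) :
    (derivative (Chebyshev.T ℝ d)).eval (s + 1) =
      ∑ k ∈ Finset.Icc 1 d, s ^ (k - 1) * markovConst d k / (Nat.factorial (k - 1)) := by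
  have hdeg : (taylor 1 (derivative (Chebyshev.T ℝ d))).natDegree < d := by
    rw [natDegree_taylor]
    have h1 := natDegree_derivative_le (Chebyshev.T ℝ d)
    rw [Chebyshev.natDegree_T] at h1
    rw [Int.natAbs_natCast] at h1
    omega
  rw [← taylor_eval, eval_eq_sum_range' hdeg]
  rw [← Finset.Ico_add_one_right_eq_Icc, Finset.sum_Ico_eq_sum_range]
  refine Finset.sum_congr (by simp) fun k _ => ?_
  rw [taylor_coeff, show 1 + k - 1 = k by omega, ← iterate_derivative_T_one_eq_markovConst,
    add_comm 1 k, Function.iterate_succ_apply, ← factorial_smul_hasseDeriv]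
  have : (Nat.factorial k : ℝ) ≠ 0 := by positivity
  rw [LinearMap.smul_apply, eval_smul, nsmul_eq_mul]
  field_simp

open Polynomial in
lemma deriv_zero_aux (d : ℕ) (a b : ℝ) (ha : 0 < a) (hab : a < b)
    (ε : ℝ) (hε : 0 < ε) (p : Polynomial ℝ) (hp : p.natDegree ≤ d)
    (hsmall : ∀ x ∈ Set.Icc a b, |p.eval x| ≤ ε) :
    -p.derivative.eval 0 ≤ ε * (2 / (b - a)) *
      (derivative (Chebyshev.T ℝ d)).eval (2 / (b - a) * a + 1) := by
  have hba : 0 < b - a := sub_pos.mpr hab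
  set c := (b - a) / 2 with hc
  have hcpos : 0 < c := by positivity
  have hcc : 2 / (b - a) = c⁻¹ := by rw [hc, inv_div]
  rw [hcc]
  set q : ℝ[X] := C (-c) * X + C (a + c) with hq
  set P : ℝ[X] := C ε⁻¹ * p.comp q with hP
  have hPdeg : P.degree ≤ d := by
    apply degree_le_of_natDegree_le
    have h2 : q.natDegree ≤ 1 := natDegree_linear_le
    calc P.natDegree ≤ (p.comp q).natDegree := natDegree_C_mul_le _ _
      _ ≤ p.natDegree * q.natDegree := natDegree_comp_le
      _ ≤ d * 1 := Nat.mul_le_mul hp h2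
      _ = d := mul_one d
  have hPbnd : ∀ x ∈ Set.Icc (-1 : ℝ) 1, |P.eval x| ≤ 1 := by
    intro x hx
    have : |p.eval (-c * x + (a + c))| ≤ ε := by
      apply hsmall
      constructor
      · nlinarith [hx.2]
      · have : b = a + 2 * c := by rw [hc]; ring
        nlinarith [hx.1]
    rw [hP, hq]
    simp only [eval_mul, eval_C, eval_comp, eval_add, eval_X]
    rw [abs_mul, abs_of_pos (inv_pos.mpr hε), inv_mul_le_iff₀ hε, mul_one]
    exact this
  have h := Chebyshev.eval_iterate_derivative_le_of_forall_abs_le_one (k := 1)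
    (x := c⁻¹ * a + 1) (by have : 0 < c⁻¹ * a := by positivity
                           linarith) hPdeg hPbnd
  simp only [Function.iterate_one] at h
  have hev : P.derivative.eval (c⁻¹ * a + 1) = ε⁻¹ * c * (-p.derivative.eval 0) := by
    rw [hP, hq]
    simp [derivative_comp]
    have : -(c * (c⁻¹ * a + 1)) + (a + c) = 0 := by field_simp; ring
    rw [this]; ring
  rw [hev] at h
  calc -p.derivative.eval 0 = ε * c⁻¹ * (ε⁻¹ * c * (-p.derivative.eval 0)) := by field_simp
    _ ≤ _ := mul_le_mul_of_nonneg_left h (by positivity)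

/-- Extrapolating the derivative at `0` of a polynomial small on `[a,b]`. -/
theorem derivative_at_zero_extrapolation (d : ℕ) (a b : ℝ) (ha : 0 < a) (hab : a < b)
    (ε : ℝ) (hε : 0 < ε) (p : Polynomial ℝ) (hp : p.natDegree ≤ d)
    (hsmall : ∀ x ∈ Set.Icc a b, |p.eval x| ≤ ε) :
    |p.derivative.eval 0| ≤ ε * ∑ k ∈ Finset.Icc 1 d,
      (2 / (b - a)) ^ k * a ^ (k - 1) * markovConst d k / (Nat.factorial (k - 1)) := by
  rcases Nat.eq_zero_or_pos d with rfl | hd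
  · have : p.derivative = 0 :=
      Polynomial.derivative_of_natDegree_zero (Nat.le_zero.mp hp)
    simp [this]
  have hsum : ε * ∑ k ∈ Finset.Icc 1 d,
      (2 / (b - a)) ^ k * a ^ (k - 1) * markovConst d k / (Nat.factorial (k - 1)) =
      ε * (2 / (b - a)) *
        (Polynomial.derivative (Polynomial.Chebyshev.T ℝ d)).eval (2 / (b - a) * a + 1) := by
    rw [eval_derivative_T_one_add d hd, mul_assoc]
    congr 1
    rw [Finset.mul_sum]
    refine Finset.sum_congr rfl fun k hk => ?_
    obtain ⟨m, rfl⟩ : ∃ m, k = m + 1 := ⟨k - 1, by have := (Finset.mem_Icc.mp hk).1; omega⟩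
    rw [Nat.add_sub_cancel, mul_pow, pow_succ]
    ring
  rw [hsum, abs_le']
  refine ⟨?_, deriv_zero_aux d a b ha hab ε hε p hp hsmall⟩
  have := deriv_zero_aux d a b ha hab ε hε (-p) (by simpa using hp) (by simpa using hsmall)
  simpa using this
end

section
/- Let d ≥ 1 be a natural number, let a be a real number with 0 < a ≤ 1/d², set b = 2 + a, let σ ≥ 0, and let p, q ∈ ℝ[X] be polynomials of degree at most d such that |p(x) − q(x)| ≤ σ for all x ∈ [a,b]. Then |p'(0) − q'(0)| ≤ e · σ / a, where e = exp(1). -/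
open Polynomial in
/-- Bound for the derivative of the Chebyshev polynomial just outside `[-1, 1]`. -/
theorem aux_T_derivative_bound (d : ℕ) (hd : 1 ≤ d) (a : ℝ) (ha : 0 < a)
    (ha' : a ≤ 1 / (d : ℝ) ^ 2) :
    (derivative (Chebyshev.T ℝ d)).eval (1 + a) ≤ Real.exp 1 / a := by
  have hd0 : (0 : ℝ) < d := by exact_mod_cast hd
  have had : a * (d : ℝ) ^ 2 ≤ 1 := by
    rwa [le_div_iff₀ (by positivity)] at ha'
  obtain ⟨t, ht, hcosh⟩ : ∃ t : ℝ, 0 < t ∧ Real.cosh t = 1 + a :=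
    ⟨Real.arcosh (1 + a), Real.arcosh_pos (by linarith), Real.cosh_arcosh (by linarith)⟩
  -- t² ≤ 2 a
  have ht2 : t ^ 2 ≤ 2 * a := by
    have h1 : Real.cosh t = Real.cosh (t / 2) ^ 2 + Real.sinh (t / 2) ^ 2 := by
      rw [← Real.cosh_two_mul]; congr 1; ring
    have h2 := Real.cosh_sq (t / 2)
    have h3 : t / 2 ≤ Real.sinh (t / 2) := Real.self_le_sinh_iff.2 (by linarith)
    nlinarith
  have hst : t ≤ Real.sinh t := Real.self_le_sinh_iff.2 ht.le
  have hs0 : 0 < Real.sinh t := lt_of_lt_of_le ht hst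
  -- sinh (d t) ≤ d t e
  have hsinh : Real.sinh (d * t) ≤ d * t * Real.exp 1 := by
    have hy : 0 < d * t := by positivity
    obtain ⟨c, hc, hceq⟩ := exists_hasDerivAt_eq_slope Real.sinh Real.cosh hy
      Real.continuous_sinh.continuousOn (fun x _ => Real.hasDerivAt_sinh x)
    have hcb : Real.cosh c ≤ Real.exp 1 := by
      refine (Real.cosh_le_exp_half_sq c).trans (Real.exp_le_exp.2 ?_)
      have : c ^ 2 ≤ (d * t) ^ 2 := pow_le_pow_left₀ hc.1.le hc.2.le 2
      nlinarith [sq_nonneg (d : ℝ)]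
    rw [Real.sinh_zero, sub_zero, sub_zero, eq_div_iff hy.ne'] at hceq
    rw [← hceq, mul_comm]
    exact mul_le_mul_of_nonneg_left hcb hy.le
  have hU : (Chebyshev.U ℝ ((d : ℤ) - 1)).eval (1 + a) * Real.sinh t = Real.sinh (d * t) := by
    rw [← hcosh, Chebyshev.U_real_cosh]
    congr 1; push_cast; ring
  have hU' : (Chebyshev.U ℝ ((d : ℤ) - 1)).eval (1 + a) ≤ d * Real.exp 1 := by
    refine le_of_mul_le_mul_right ?_ hs0
    rw [hU]
    refine hsinh.trans ?_
    have := mul_le_mul_of_nonneg_left hst (by positivity : 0 ≤ d * Real.exp 1)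
    linarith
  rw [Chebyshev.T_derivative_eq_U, eval_mul]
  simp only [Int.cast_natCast, eval_natCast]
  rw [le_div_iff₀ ha]
  calc (d : ℝ) * (Chebyshev.U ℝ ((d : ℤ) - 1)).eval (1 + a) * a
      ≤ d * (d * Real.exp 1) * a := by gcongr
    _ = (a * (d : ℝ) ^ 2) * Real.exp 1 := by ring
    _ ≤ 1 * Real.exp 1 := by gcongr
    _ = Real.exp 1 := one_mul _

open Polynomial in
/-- One-sided bound for a single polynomial and positive `s`. -/
theorem aux_one_sided (d : ℕ) (hd : 1 ≤ d) (a : ℝ) (ha : 0 < a)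
    (ha' : a ≤ 1 / (d : ℝ) ^ 2) (s : ℝ) (hs : 0 < s) (r : Polynomial ℝ)
    (hr : r.natDegree ≤ d) (hb : ∀ x ∈ Set.Icc a (2 + a), |r.eval x| ≤ s) :
    -(r.derivative.eval 0) ≤ Real.exp 1 * s / a := by
  set P : Polynomial ℝ := C s⁻¹ * r.comp (C (1 + a) - X) with hP
  have hlin : (C (1 + a) - X : ℝ[X]).natDegree ≤ 1 :=
    (natDegree_sub_le _ _).trans (by simp)
  have hdeg : P.degree ≤ d := by
    refine natDegree_le_iff_degree_le.1 ?_
    refine (natDegree_C_mul_le _ _).trans ?_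
    refine natDegree_comp_le.trans ?_
    calc r.natDegree * _ ≤ d * 1 := Nat.mul_le_mul hr hlin
      _ = d := mul_one d
  have hbd : ∀ x ∈ Set.Icc (-1 : ℝ) 1, |P.eval x| ≤ 1 := by
    intro x hx
    have h := hb (1 + a - x) ⟨by linarith [hx.2], by linarith [hx.1]⟩
    simp only [hP, eval_mul, eval_C, eval_comp, eval_sub, eval_X]
    rw [abs_mul, abs_of_pos (inv_pos.2 hs), inv_mul_le_iff₀ hs, mul_one]
    exact h
  have hx : (1 : ℝ) ≤ 1 + a := by linarith
  have key := Chebyshev.eval_iterate_derivative_le_of_forall_abs_le_one (k := 1) hx hdeg hbd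
  simp only [Function.iterate_one] at key
  have key2 := key.trans (aux_T_derivative_bound d hd a ha ha')
  have hder : P.derivative.eval (1 + a) = s⁻¹ * -(r.derivative.eval 0) := by
    simp [hP, derivative_comp]
  rw [hder, inv_mul_le_iff₀ hs] at key2
  calc _ ≤ _ := key2
    _ = _ := by ring

/-- Two degree-`d` polynomials uniformly `σ`-close on `[a, 2+a]` with `a ≤ d⁻²`
have derivatives at `0` differing by at most `e·σ/a`. -/
theorem derivative_close_of_uniformly_close (d : ℕ) (hd : 1 ≤ d)
    (a : ℝ) (ha : 0 < a) (ha' : a ≤ 1 / (d : ℝ) ^ 2) (b : ℝ) (hb : b = 2 + a)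
    (σ : ℝ) (hσ : 0 ≤ σ) (p q : Polynomial ℝ)
    (hp : p.natDegree ≤ d) (hq : q.natDegree ≤ d)
    (hclose : ∀ x ∈ Set.Icc a b, |p.eval x - q.eval x| ≤ σ) :
    |p.derivative.eval 0 - q.derivative.eval 0| ≤ Real.exp 1 * σ / a := by
  subst hb
  have main : ∀ s, σ < s →
      |p.derivative.eval 0 - q.derivative.eval 0| ≤ Real.exp 1 * s / a := by
    intro s hs
    have h1 := aux_one_sided d hd a ha ha' s (hσ.trans_lt hs) (p - q)
      ((Polynomial.natDegree_sub_le _ _).trans (max_le hp hq)) (fun x hx => by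
        rw [Polynomial.eval_sub]; exact (hclose x hx).trans hs.le)
    have h2 := aux_one_sided d hd a ha ha' s (hσ.trans_lt hs) (q - p)
      ((Polynomial.natDegree_sub_le _ _).trans (max_le hq hp)) (fun x hx => by
        rw [Polynomial.eval_sub, abs_sub_comm]; exact (hclose x hx).trans hs.le)
    rw [Polynomial.derivative_sub, Polynomial.eval_sub] at h1 h2
    exact abs_le.2 ⟨by linarith, by linarith⟩
  have he : 0 < Real.exp 1 := Real.exp_pos 1
  refine le_of_forall_pos_le_add fun ε hε => ?_
  refine (main (σ + ε * a / Real.exp 1) (lt_add_of_pos_right _ (by positivity))).trans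
    (le_of_eq ?_)
  field_simp
end

section
/- Consider the two-qubit Lindblad generator with Hamiltonian H = ∑_{α∈Fin 3} a¹(α)·(σ(α) ⊗ 1) + ∑_{α∈Fin 3} a²(α)·(1 ⊗ σ(α)) + ∑_{α₁,α₂∈Fin 3} c(α₁,α₂)·(σ(α₁) ⊗ σ(α₂)), where a¹, a² : Fin 3 → ℝ and c : Fin 3 → Fin 3 → ℝ, and single-qubit dissipators with arbitrary coefficient matrices D¹, D² : Fin 3 → Fin 3 → ℂ. Let ρ₀ = ρ(τ₁) ⊗ ρ(τ₂), and define 𝒟(ρ₀) = ∑_{μ,ν} D¹(μ,ν)·( (σ(μ)⊗1)·ρ₀·(σ(ν)⊗1) − (1/2)·((σ(ν)·σ(μ))⊗1)·ρ₀ − (1/2)·ρ₀·((σ(ν)·σ(μ))⊗1) ) + ∑_{μ,ν} D²(μ,ν)·( (1⊗σ(μ))·ρ₀·(1⊗σ(ν)) − (1/2)·(1⊗(σ(ν)·σ(μ)))·ρ₀ − (1/2)·ρ₀·(1⊗(σ(ν)·σ(μ))) ). Then for all γ, η ∈ Fin 3 with τ₁ ≠ γ and τ₂ ≠ η: tr(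 ( −i·(H·ρ₀ − ρ₀·H) + 𝒟(ρ₀) ) · (σ(γ) ⊗ σ(η)) ) = 2 · ∑_{α₁,α₂∈Fin 3} c(α₁,α₂) · ( ε(α₁,τ₁,γ)·δ(α₂,η) + ε(α₂,τ₂,η)·δ(α₁,γ) ). In particular, all single-qubit Hamiltonian coefficients and all dissipative coefficients drop out, isolating the two-qubit couplings c. -/
open Matrix
open scoped Kronecker

/-- The Pauli matrices. -/
noncomputable def pauli : Fin 3 → Matrix (Fin 2) (Fin 2) ℂ
  | 0 => !![0, 1; 1, 0]
  | 1 => !![0, -Complex.I; Complex.I, 0]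
  | 2 => !![1, 0; 0, -1]

/-- The Levi-Civita symbol on three indices in `Fin 3`. -/
def levi (i j k : Fin 3) : ℝ :=
  if (i.val, j.val, k.val) = (0, 1, 2) ∨ (i.val, j.val, k.val) = (1, 2, 0) ∨
      (i.val, j.val, k.val) = (2, 0, 1) then 1
  else if (i.val, j.val, k.val) = (0, 2, 1) ∨ (i.val, j.val, k.val) = (2, 1, 0) ∨
      (i.val, j.val, k.val) = (1, 0, 2) then -1
  else 0

/-- The Kronecker delta. -/
def kdelta (i j : Fin 3) : ℝ := if i = j then 1 else 0

/-- The density matrix `(1 + σ τ)/2` of the `+1` eigenstate of the Pauli matrix `σ τ`. -/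
noncomputable def plusState (τ : Fin 3) : Matrix (Fin 2) (Fin 2) ℂ :=
  (1 / 2 : ℂ) • (1 + pauli τ)

/-- A Pauli product state has vanishing expectation in a different Pauli direction. -/
lemma trace_plusState_pauli (τ γ : Fin 3) (h : τ ≠ γ) :
    Matrix.trace (plusState τ * pauli γ) = 0 := by
  fin_cases τ <;> fin_cases γ <;>
    simp_all [plusState, pauli, Matrix.trace_fin_two, Matrix.mul_apply, Fin.sum_univ_two]

lemma trace_plus_right (τ α γ : Fin 3) :
    Matrix.trace (plusState τ * pauli α * pauli γ) =
      (kdelta α γ : ℂ) - Complex.I * (levi α τ γ : ℂ) := by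
  fin_cases τ <;> fin_cases α <;> fin_cases γ <;>
    simp [plusState, pauli, levi, kdelta, Matrix.trace_fin_two, Matrix.mul_apply,
      Fin.sum_univ_two] <;> ring_nf <;> simp <;> ring_nf

lemma trace_plus_left (τ α γ : Fin 3) :
    Matrix.trace (pauli α * plusState τ * pauli γ) =
      (kdelta α γ : ℂ) + Complex.I * (levi α τ γ : ℂ) := by
  rw [← Matrix.trace_mul_cycle, trace_plus_right]
  fin_cases τ <;> fin_cases α <;> fin_cases γ <;> simp [levi, kdelta]

/-- Choosing the initial product Pauli state with `τ₁ ≠ γ`, `τ₂ ≠ η` and measuring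
`σ γ ⊗ σ η` isolates the two-qubit Hamiltonian couplings in the Lindblad Master equation. -/
theorem isolate_two_qubit_couplings
    (a₁ a₂ : Fin 3 → ℝ) (c : Fin 3 → Fin 3 → ℝ) (D₁ D₂ : Fin 3 → Fin 3 → ℂ)
    (τ₁ τ₂ γ η : Fin 3) (h₁ : τ₁ ≠ γ) (h₂ : τ₂ ≠ η) :
    let H : Matrix (Fin 2 × Fin 2) (Fin 2 × Fin 2) ℂ :=
      (∑ α : Fin 3, (a₁ α : ℂ) • (pauli α ⊗ₖ (1 : Matrix (Fin 2) (Fin 2) ℂ))) +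
      (∑ α : Fin 3, (a₂ α : ℂ) • ((1 : Matrix (Fin 2) (Fin 2) ℂ) ⊗ₖ pauli α)) +
      ∑ α₁ : Fin 3, ∑ α₂ : Fin 3, (c α₁ α₂ : ℂ) • (pauli α₁ ⊗ₖ pauli α₂)
    let ρ₀ : Matrix (Fin 2 × Fin 2) (Fin 2 × Fin 2) ℂ := plusState τ₁ ⊗ₖ plusState τ₂
    let Diss : Matrix (Fin 2 × Fin 2) (Fin 2 × Fin 2) ℂ :=
      (∑ μ : Fin 3, ∑ ν : Fin 3, D₁ μ ν •
        ((pauli μ ⊗ₖ (1 : Matrix (Fin 2) (Fin 2) ℂ)) * ρ₀ *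
            (pauli ν ⊗ₖ (1 : Matrix (Fin 2) (Fin 2) ℂ)) -
          (1 / 2 : ℂ) • (((pauli ν * pauli μ) ⊗ₖ (1 : Matrix (Fin 2) (Fin 2) ℂ)) * ρ₀) -
          (1 / 2 : ℂ) • (ρ₀ * ((pauli ν * pauli μ) ⊗ₖ (1 : Matrix (Fin 2) (Fin 2) ℂ))))) +
      ∑ μ : Fin 3, ∑ ν : Fin 3, D₂ μ ν •
        (((1 : Matrix (Fin 2) (Fin 2) ℂ) ⊗ₖ pauli μ) * ρ₀ *
            ((1 : Matrix (Fin 2) (Fin 2) ℂ) ⊗ₖ pauli ν) -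
          (1 / 2 : ℂ) • (((1 : Matrix (Fin 2) (Fin 2) ℂ) ⊗ₖ (pauli ν * pauli μ)) * ρ₀) -
          (1 / 2 : ℂ) • (ρ₀ * ((1 : Matrix (Fin 2) (Fin 2) ℂ) ⊗ₖ (pauli ν * pauli μ))))
    Matrix.trace (((-Complex.I) • (H * ρ₀ - ρ₀ * H) + Diss) * (pauli γ ⊗ₖ pauli η)) =
      ((2 * ∑ α₁ : Fin 3, ∑ α₂ : Fin 3,
          c α₁ α₂ * (levi α₁ τ₁ γ * kdelta α₂ η + levi α₂ τ₂ η * kdelta α₁ γ) : ℝ) : ℂ) := by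
  intro H ρ₀ Diss
  have e₁ := trace_plusState_pauli τ₁ γ h₁
  have e₂ := trace_plusState_pauli τ₂ η h₂
  have hD : Matrix.trace (Diss * (pauli γ ⊗ₖ pauli η)) = 0 := by
    simp only [Diss, ρ₀, add_mul, sub_mul, Finset.sum_mul, smul_mul_assoc, Matrix.trace_add,
      Matrix.trace_sub, Matrix.trace_sum, Matrix.trace_smul, ← Matrix.mul_kronecker_mul,
      Matrix.trace_kronecker, one_mul, mul_one, e₁, e₂, mul_zero, zero_mul, smul_zero, sub_zero,
      Finset.sum_const_zero, add_zero]
  rw [add_mul, Matrix.trace_add, hD, add_zero]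
  simp only [H, ρ₀, add_mul, mul_add, sub_mul, Finset.sum_mul, Finset.mul_sum, smul_mul_assoc,
    mul_smul_comm, Matrix.trace_add,
    Matrix.trace_sub, Matrix.trace_sum, Matrix.trace_smul, ← Matrix.mul_kronecker_mul,
    Matrix.trace_kronecker, one_mul, mul_one, e₁, e₂, mul_zero, zero_mul, smul_zero, sub_zero,
    Finset.sum_const_zero, add_zero, zero_add, trace_plus_left, trace_plus_right, smul_eq_mul]
  rw [← Finset.sum_sub_distrib, Finset.mul_sum]
  push_cast
  refine Finset.sum_congr rfl fun α₁ _ => ?_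
  rw [← Finset.sum_sub_distrib, Finset.mul_sum]
  refine Finset.sum_congr rfl fun α₂ _ => ?_
  linear_combination (-2 * (c α₁ α₂ : ℂ) * ((levi α₁ τ₁ γ : ℂ) * (kdelta α₂ η : ℂ) +
    (levi α₂ τ₂ η : ℂ) * (kdelta α₁ γ : ℂ))) * Complex.I_sq
end

section
/- For all μ, ν, τ₁, τ₂, ξ₁, ξ₂, ξ₃ ∈ Fin 3, the following three-qubit trace identity holds for a dissipator acting on the third (maximally mixed) qubit: letting ρ₃ = ρ(τ₁) ⊗ ρ(τ₂) ⊗ (1/2), one has tr( ( (1⊗1⊗σ(μ))·ρ₃·(1⊗1⊗σ(ν)) − (1/2)·(1⊗1⊗(σ(ν)·σ(μ)))·ρ₃ − (1/2)·ρ₃·(1⊗1⊗(σ(ν)·σ(μ))) ) · (σ(ξ₁) ⊗ σ(ξ₂) ⊗ σ(ξ₃)) ) = 2·i · ε(μ,ν,ξ₃) · δ(τ₁,ξ₁) · δ(τ₂,ξ₂). -/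
open Matrix
open scoped Kronecker

theorem aux_trace_plus (τ ξ : Fin 3) :
    Matrix.trace (plusState τ * pauli ξ) = (kdelta τ ξ : ℂ) := by
  fin_cases τ <;> fin_cases ξ <;>
    simp [plusState, pauli, kdelta, Matrix.trace, Matrix.mul_apply, Fin.sum_univ_two,
      Matrix.one_apply] <;> norm_num <;> linear_combination (-1 : ℂ) * Complex.I_mul_I

theorem aux_trace_three (μ ν ξ : Fin 3) :
    Matrix.trace (pauli μ * pauli ν * pauli ξ) - Matrix.trace (pauli ν * pauli μ * pauli ξ)
      = 4 * Complex.I * (levi μ ν ξ : ℂ) := by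
  fin_cases μ <;> fin_cases ν <;> fin_cases ξ <;>
    simp [pauli, levi, Matrix.trace, Fin.sum_univ_two] <;> ring

/-- A dissipator on the third (maximally mixed) qubit traced against a three-site
Pauli observable isolates the dissipation coefficients. -/
theorem third_qubit_dissipator_trace_identity (μ ν τ₁ τ₂ ξ₁ ξ₂ ξ₃ : Fin 3) :
    let ρ₃ : Matrix ((Fin 2 × Fin 2) × Fin 2) ((Fin 2 × Fin 2) × Fin 2) ℂ :=
      (plusState τ₁ ⊗ₖ plusState τ₂) ⊗ₖ ((1 / 2 : ℂ) • (1 : Matrix (Fin 2) (Fin 2) ℂ))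
    let E : Fin 3 → Matrix ((Fin 2 × Fin 2) × Fin 2) ((Fin 2 × Fin 2) × Fin 2) ℂ :=
      fun κ => ((1 : Matrix (Fin 2) (Fin 2) ℂ) ⊗ₖ (1 : Matrix (Fin 2) (Fin 2) ℂ)) ⊗ₖ pauli κ
    Matrix.trace
        ((E μ * ρ₃ * E ν -
            (1 / 2 : ℂ) • ((((1 : Matrix (Fin 2) (Fin 2) ℂ) ⊗ₖ (1 : Matrix (Fin 2) (Fin 2) ℂ))
                ⊗ₖ (pauli ν * pauli μ)) * ρ₃) -
            (1 / 2 : ℂ) • (ρ₃ * (((1 : Matrix (Fin 2) (Fin 2) ℂ) ⊗ₖ (1 : Matrix (Fin 2) (Fin 2) ℂ))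
                ⊗ₖ (pauli ν * pauli μ)))) *
          ((pauli ξ₁ ⊗ₖ pauli ξ₂) ⊗ₖ pauli ξ₃)) =
      2 * Complex.I * (levi μ ν ξ₃ : ℂ) * (kdelta τ₁ ξ₁ : ℂ) * (kdelta τ₂ ξ₂ : ℂ) := by
  intro ρ₃ E
  have h := aux_trace_three μ ν ξ₃
  simp only [ρ₃, E, ← Matrix.mul_kronecker_mul, Matrix.sub_mul, Matrix.smul_mul, Matrix.trace_sub,
    Matrix.trace_smul, Matrix.trace_kronecker, Matrix.one_mul, Matrix.mul_one, Matrix.mul_smul,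
    aux_trace_plus, smul_eq_mul]
  linear_combination (1 / 2 * (kdelta τ₁ ξ₁ : ℂ) * (kdelta τ₂ ξ₂ : ℂ)) * h
end
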